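/- arXiv:1404.0999 — 2 statements merged into one kernel-verified Lean document; each statement's English description precedes it below -/
import Mathlib

section
/- Let (Ω, A, P) be a probability space, X, Y : Ω → ℝ^d integrable random vectors, and Z : Ω → S a random element in a measurable space S. Then X | Z ≤cx Y | Z if and only if X and Y admit a Z-conditional coupling (X̂, Ŷ, Ẑ) such that X̂ = E(Ŷ | σ(X̂, Ẑ)) almost surely. -/
open MeasureTheory ProbabilityTheory Filter

noncomputable section

abbrev Euc (d : ℕ) : Type := EuclideanSpace ℝ (Fin d)

def FiniteFirstMoment {d : ℕ} (μ : Measure (Euc d)) : Prop :=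
  Integrable (fun x => x) μ

def ConvexOrder {d : ℕ} (μ ν : Measure (Euc d)) : Prop :=
  ∀ φ : Euc d → ℝ, ConvexOn ℝ Set.univ φ → Integrable φ μ → Integrable φ ν →
    ∫ x, φ x ∂μ ≤ ∫ x, φ x ∂ν

def CoordMono {d : ℕ} (φ : Euc d → ℝ) : Prop :=
  ∀ x y : Euc d, (∀ i, x i ≤ y i) → φ x ≤ φ y

def IncConvexOrder {d : ℕ} (μ ν : Measure (Euc d)) : Prop :=
  ∀ φ : Euc d → ℝ, ConvexOn ℝ Set.univ φ → CoordMono φ → Integrable φ μ → Integrable φ ν →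
    ∫ x, φ x ∂μ ≤ ∫ x, φ x ∂ν

def IsCoupling {d : ℕ} (lam : Measure (Euc d × Euc d)) (μ ν : Measure (Euc d)) : Prop :=
  lam.map Prod.fst = μ ∧ lam.map Prod.snd = ν

def fstSigma (d : ℕ) : MeasurableSpace (Euc d × Euc d) :=
  MeasurableSpace.comap Prod.fst inferInstance

def IsMartingaleCoupling {d : ℕ} (lam : Measure (Euc d × Euc d)) : Prop :=
  lam[(fun p : Euc d × Euc d => p.2) | fstSigma d] =ᵐ[lam] (fun p => p.1)

def IsSubmartingaleCoupling {d : ℕ} (lam : Measure (Euc d × Euc d)) : Prop :=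
  ∀ᵐ p ∂lam, ∀ i, p.1 i ≤ (lam[(fun q : Euc d × Euc d => q.2) | fstSigma d]) p i
def CondCXLe {d : ℕ} {Ω : Type} {mΩ : MeasurableSpace Ω} (P : Measure Ω)
    (m : MeasurableSpace Ω) (X Y : Ω → Euc d) : Prop :=
  ∀ φ : Euc d → ℝ, ConvexOn ℝ Set.univ φ →
    Integrable (fun ω => φ (X ω)) P → Integrable (fun ω => φ (Y ω)) P →
    P[(fun ω => φ (X ω)) | m] ≤ᵐ[P] P[(fun ω => φ (Y ω)) | m]

def CondICXLe {d : ℕ} {Ω : Type} {mΩ : MeasurableSpace Ω} (P : Measure Ω)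
    (m : MeasurableSpace Ω) (X Y : Ω → Euc d) : Prop :=
  ∀ φ : Euc d → ℝ, ConvexOn ℝ Set.univ φ → CoordMono φ →
    Integrable (fun ω => φ (X ω)) P → Integrable (fun ω => φ (Y ω)) P →
    P[(fun ω => φ (X ω)) | m] ≤ᵐ[P] P[(fun ω => φ (Y ω)) | m]

/-! If `X = E(Y | X, Z)`, then Jensen's inequality and the tower property give the order, and the
order only depends on the laws of `(X, Z)` and `(Y, Z)`.

Conversely, suppose first that `Z` takes values in a Polish space. Discretise `X` and `Z` to
finitely many values. The vectors of partial means of `Y` attainable by splitting `P` along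
randomised labels form a convex set. If a functional `L` separated the vector of `X` from it, then
the maximum of the finitely many affine functions given by `L` would be a convex function violating
the order. So every discretisation has an approximate martingale coupling; these couplings are
tight, and any weak limit is a martingale coupling.

A general `Z` is replaced by `W(Z)`, where `W : S → [0, ∞]^ℕ` encodes the conditional law of
`(X, Y)` given `Z`. This statistic is sufficient, so the martingale kernel from `(X, W(Z))` to `Y`
also works for `(X, Z)`. -/

/-- The conditional convex order `X | m ≤cx Y | m` for random vectors in a real normed space, tested
on continuous convex functions. Continuity is automatic in finite dimension, where this is
`CondCXLe`. -/
def CondConvexOrder {Ω E : Type*} [NormedAddCommGroup E] [NormedSpace ℝ E]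
    {_ : MeasurableSpace Ω} (P : Measure Ω) (m : MeasurableSpace Ω) (X Y : Ω → E) : Prop :=
  ∀ φ : E → ℝ, ConvexOn ℝ Set.univ φ → Continuous φ →
    Integrable (fun ω => φ (X ω)) P → Integrable (fun ω => φ (Y ω)) P →
    P[(fun ω => φ (X ω)) | m] ≤ᵐ[P] P[(fun ω => φ (Y ω)) | m]

section ConvexOrder

variable {Ω : Type*} {m mΩ : MeasurableSpace Ω} {P : Measure Ω}

theorem condExp_le_condExp_iff_setIntegral_le (hm : m ≤ mΩ) [SigmaFinite (P.trim hm)]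
    {f g : Ω → ℝ} (hf : Integrable f P) (hg : Integrable g P) :
    P[f | m] ≤ᵐ[P] P[g | m] ↔
      ∀ s, MeasurableSet[m] s → ∫ ω in s, f ω ∂P ≤ ∫ ω in s, g ω ∂P := by
  constructor <;> intro h
  · intro s hs
    rw [← setIntegral_condExp hm hf hs, ← setIntegral_condExp hm hg hs]
    exact setIntegral_mono_ae integrable_condExp.integrableOn integrable_condExp.integrableOn h
  · refine ae_le_of_ae_le_trim (hm := hm) (ae_le_of_forall_setIntegral_le
      (integrable_condExp.trim hm stronglyMeasurable_condExp)
      (integrable_condExp.trim hm stronglyMeasurable_condExp) fun s hs _ => ?_)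
    rw [← setIntegral_trim hm stronglyMeasurable_condExp hs,
      ← setIntegral_trim hm stronglyMeasurable_condExp hs,
      setIntegral_condExp hm hf hs, setIntegral_condExp hm hg hs]
    exact h s hs

section Fiber

variable {K F : Type*} [NormedAddCommGroup F] {k : Ω → K} {f : K → Ω → F}

theorem apply_fiber_eq_sum_indicator [Fintype K] :
    (fun ω => f (k ω) ω) = fun ω => ∑ a, (k ⁻¹' {a}).indicator (f a) ω := by
  funext ω
  rw [Finset.sum_eq_single (k ω)] <;> simp +contextual [eq_comm]

variable [MeasurableSpace K] [MeasurableSingletonClass K]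

theorem integrable_apply_fiber [Finite K] (hk : Measurable k) (hf : ∀ a, Integrable (f a) P) :
    Integrable (fun ω => f (k ω) ω) P := by
  have := Fintype.ofFinite K
  rw [apply_fiber_eq_sum_indicator]
  exact integrable_finsetSum _ fun a _ => (hf a).indicator (hk (measurableSet_singleton a))

theorem integral_apply_fiber [Fintype K] [NormedSpace ℝ F] (hk : Measurable k)
    (hf : ∀ a, Integrable (f a) P) :
    ∫ ω, f (k ω) ω ∂P = ∑ a, ∫ ω in k ⁻¹' {a}, f a ω ∂P := by
  have hfib (a : K) : MeasurableSet (k ⁻¹' {a}) := hk (measurableSet_singleton a)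
  rw [apply_fiber_eq_sum_indicator, integral_finsetSum _ fun a _ => (hf a).indicator (hfib a)]
  exact Finset.sum_congr rfl fun a _ => integral_indicator (hfib a)

end Fiber

theorem CondConvexOrder.integral_le_of_finite {E : Type*} [NormedAddCommGroup E] [NormedSpace ℝ E]
    {X Y : Ω → E} (h : CondConvexOrder P m X Y) (hm : m ≤ mΩ) [SigmaFinite (P.trim hm)]
    {K : Type*} [Finite K] [MeasurableSpace K] [MeasurableSingletonClass K] {k : Ω → K}
    (hk : Measurable[m] k) {φ : K → E → ℝ} (hφ : ∀ a, ConvexOn ℝ Set.univ (φ a))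
    (hφc : ∀ a, Continuous (φ a)) (hX : ∀ a, Integrable (fun ω => φ a (X ω)) P)
    (hY : ∀ a, Integrable (fun ω => φ a (Y ω)) P) :
    ∫ ω, φ (k ω) (X ω) ∂P ≤ ∫ ω, φ (k ω) (Y ω) ∂P := by
  have := Fintype.ofFinite K
  have hk' : Measurable k := hk.mono hm le_rfl
  rw [integral_apply_fiber hk' hX, integral_apply_fiber hk' hY]
  exact Finset.sum_le_sum fun a _ => (condExp_le_condExp_iff_setIntegral_le hm (hX a) (hY a)).1
    (h _ (hφ a) (hφc a) (hX a) (hY a)) _ (hk (measurableSet_singleton a))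

end ConvexOrder

theorem exists_measurable_argmax {α I R : Type*} [MeasurableSpace α] [Finite I] [Nonempty I]
    [MeasurableSpace I] [LinearOrder R] [TopologicalSpace R] [OrderClosedTopology R]
    [SecondCountableTopology R] [MeasurableSpace R] [OpensMeasurableSpace R]
    {h : I → α → R} (hh : ∀ i, Measurable (h i)) :
    ∃ j : α → I, Measurable j ∧ ∀ a i, h i a ≤ h (j a) a := by
  classical
  obtain ⟨e, he⟩ := exists_surjective_nat I
  have hmax (a : α) : ∃ n, ∀ i, h i a ≤ h (e n) a := by
    obtain ⟨j, hj⟩ := Finite.exists_max fun i => h i a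
    obtain ⟨n, rfl⟩ := he j
    exact ⟨n, hj⟩
  refine ⟨fun a => e (Nat.find (hmax a)), (measurable_of_countable e).comp ?_,
    fun a => Nat.find_spec (hmax a)⟩
  exact measurable_find hmax fun n => by
    simpa only [Set.ofPred_forall] using
      MeasurableSet.iInter fun i => measurableSet_le (hh i) (hh (e n))

theorem mem_closure_of_convex_of_forall_exists_le {F : Type*} [AddCommGroup F] [Module ℝ F]
    [TopologicalSpace F] [IsTopologicalAddGroup F] [ContinuousSMul ℝ F] [LocallyConvexSpace ℝ F]
    {s : Set F} (hs : Convex ℝ s) {x : F} (hx : ∀ L : F →L[ℝ] ℝ, ∃ y ∈ s, L x ≤ L y) :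
    x ∈ closure s := by
  rw [← iInter_halfSpaces_eq hs.closure isClosed_closure]
  exact Set.mem_iInter.2 fun L => (hx L).imp fun y hy => ⟨subset_closure hy.1, hy.2⟩

theorem convex_setOf_integral_of_map_eq {α β F : Type*} [MeasurableSpace α] [MeasurableSpace β]
    [NormedAddCommGroup F] [NormedSpace ℝ F] {f : α → β} (hf : Measurable f) (ν : Measure β)
    (g : α → F) :
    Convex ℝ {c | ∃ ρ : Measure α, ρ.map f = ν ∧ Integrable g ρ ∧ ∫ a, g a ∂ρ = c} := by
  rintro _ ⟨ρ₁, hρ₁, hg₁, rfl⟩ _ ⟨ρ₂, hρ₂, hg₂, rfl⟩ a b ha hb hab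
  have hg₁' := hg₁.smul_measure (c := ENNReal.ofReal a) ENNReal.ofReal_ne_top
  have hg₂' := hg₂.smul_measure (c := ENNReal.ofReal b) ENNReal.ofReal_ne_top
  refine ⟨ENNReal.ofReal a • ρ₁ + ENNReal.ofReal b • ρ₂, ?_, hg₁'.add_measure hg₂', ?_⟩
  · rw [Measure.map_add _ _ hf, Measure.map_smul, Measure.map_smul, hρ₁, hρ₂, ← add_smul,
      ← ENNReal.ofReal_add ha hb, hab, ENNReal.ofReal_one, one_smul]
  · rw [integral_add_measure hg₁' hg₂', integral_smul_measure, integral_smul_measure,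
      ENNReal.toReal_ofReal ha, ENNReal.toReal_ofReal hb]

section FiniteApproximation

open scoped Classical in
/-- For `p = (j, y)`, the family `(𝟙[a = j], 𝟙[a = j] • y)` indexed by the labels `a : J`. Its
expectation under a law on `J × E` records the mass of every label and the partial mean of `y` over
it. -/
def labelMoment {J E : Type*} [Zero E] (p : J × E) : J → ℝ × E := Pi.single p.1 (1, p.2)

variable {J E : Type*} [NormedAddCommGroup E]

theorem convexOn_clm_labelMoment [NormedSpace ℝ E] (L : (J → ℝ × E) →L[ℝ] ℝ) (j : J) :
    ConvexOn ℝ Set.univ fun y : E => L (labelMoment (j, y)) := by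
  refine ⟨convex_univ, fun x _ y _ a b _ _ hab => le_of_eq ?_⟩
  have : labelMoment (j, a • x + b • y) = a • labelMoment (j, x) + b • labelMoment (j, y) := by
    simp [labelMoment, ← Pi.single_smul, ← Pi.single_add, hab]
  simp only [this, map_add, map_smul]

theorem sum_smul_labelMoment [Fintype J] [NormedSpace ℝ E] (c : J → ℝ) (p : J × E) :
    ∑ j, c j • labelMoment p j = c p.1 • ((1 : ℝ), p.2) := by
  classical
  rw [Finset.sum_eq_single p.1] <;> simp +contextual [labelMoment]

theorem continuous_labelMoment (j : J) : Continuous fun y : E => labelMoment (j, y) := by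
  classical
  exact (continuous_single j).comp (by fun_prop : Continuous fun y : E => ((1 : ℝ), y))

theorem norm_labelMoment_le [Fintype J] (p : J × E) : ‖labelMoment p‖ ≤ 1 + ‖p.2‖ := by
  classical
  rw [labelMoment, Pi.norm_single, Prod.norm_def, norm_one]
  exact max_le (by simp) (by simp)

variable [MeasurableSpace J] [MeasurableSingletonClass J] [MeasurableSpace E] [BorelSpace E]
  [SecondCountableTopology E] {Ω : Type*} {m mΩ : MeasurableSpace Ω} {P : Measure Ω}

theorem measurable_labelMoment [Countable J] :
    Measurable (labelMoment : J × E → J → ℝ × E) :=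
  measurable_from_prod_countable_right fun j => (continuous_labelMoment j).measurable

theorem integrable_labelMoment [Fintype J] [IsFiniteMeasure P] {j : Ω → J} (hj : Measurable j)
    {U : Ω → E} (hU : Integrable U P) : Integrable (fun ω => labelMoment (j ω, U ω)) P :=
  ((integrable_const 1).add hU.norm).mono'
    (measurable_labelMoment.comp_aemeasurable
      (hj.aemeasurable.prodMk hU.aemeasurable)).aestronglyMeasurable
    (Eventually.of_forall fun _ => norm_labelMoment_le _)

variable [NormedSpace ℝ E]

theorem integral_smul_eq_sum_smul_integral_labelMoment [Fintype J] [CompleteSpace E]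
    [IsFiniteMeasure P] {j : Ω → J} (hj : Measurable j) {U : Ω → E} (hU : Integrable U P)
    (c : J → ℝ) :
    ∫ ω, c (j ω) • ((1 : ℝ), U ω) ∂P = ∑ a, c a • (∫ ω, labelMoment (j ω, U ω) ∂P) a := by
  have hint (a : J) : Integrable (fun ω => labelMoment (j ω, U ω) a) P :=
    (integrable_labelMoment hj hU).eval a
  simp only [← sum_smul_labelMoment c (j _, U _)]
  rw [integral_finsetSum _ fun a _ => by exact (hint a).smul (c a)]
  simp only [eval_integral hint, integral_smul]

theorem norm_integral_smul_sub_le [Fintype J] [CompleteSpace E] {Ω' : Type*}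
    {_ : MeasurableSpace Ω'} {P' : Measure Ω'} [IsFiniteMeasure P] [IsFiniteMeasure P'] {j : Ω → J}
    (hj : Measurable j) {U : Ω → E} (hU : Integrable U P) {j' : Ω' → J} (hj' : Measurable j')
    {U' : Ω' → E} (hU' : Integrable U' P') {c : J → ℝ} {C : ℝ} (hc : ∀ a, ‖c a‖ ≤ C) :
    ‖∫ ω, c (j ω) • ((1 : ℝ), U ω) ∂P - ∫ ω, c (j' ω) • ((1 : ℝ), U' ω) ∂P'‖ ≤
      Fintype.card J *
        (C * ‖∫ ω, labelMoment (j ω, U ω) ∂P - ∫ ω, labelMoment (j' ω, U' ω) ∂P'‖) := by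
  rw [integral_smul_eq_sum_smul_integral_labelMoment hj hU,
    integral_smul_eq_sum_smul_integral_labelMoment hj' hU', ← Finset.sum_sub_distrib]
  refine (norm_sum_le _ _).trans ((Finset.sum_le_card_nsmul _ _ _ fun a _ => ?_).trans_eq
    (nsmul_eq_mul _ _))
  rw [← smul_sub, ← Pi.sub_apply, norm_smul]
  exact mul_le_mul (hc a) (norm_le_pi_norm _ a) (norm_nonneg _) ((norm_nonneg _).trans (hc a))

variable {I K : Type*} [Nonempty I]
  [MeasurableSpace I] [MeasurableSingletonClass I] [MeasurableSpace K] [MeasurableSingletonClass K]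

theorem CondConvexOrder.exists_integral_clm_labelMoment_le [Finite I] [Finite K]
    (hm : m ≤ mΩ) [IsFiniteMeasure P] {X Y : Ω → E} (h : CondConvexOrder P m X Y)
    (hX : Integrable X P) (hYm : Measurable Y) (hY : Integrable Y P)
    {i : Ω → I} (hi : Measurable i) {k : Ω → K} (hk : Measurable[m] k)
    (L : (I × K → ℝ × E) →L[ℝ] ℝ) :
    ∃ j : Ω → I, Measurable j ∧
      ∫ ω, L (labelMoment ((i ω, k ω), X ω)) ∂P ≤ ∫ ω, L (labelMoment ((j ω, k ω), Y ω)) ∂P := by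
  have := Fintype.ofFinite I
  have := Fintype.ofFinite K
  have hk' : Measurable k := hk.mono hm le_rfl
  obtain ⟨j, hj, hle⟩ := exists_measurable_argmax (h := fun a ω => L (labelMoment ((a, k ω), Y ω)))
    fun a => L.measurable.comp
      (measurable_labelMoment.comp ((measurable_const.prodMk hk').prodMk hYm))
  let φ (b : K) : E → ℝ :=
    Finset.univ.sup' Finset.univ_nonempty fun a y => L (labelMoment ((a, b), y))
  have le_φ (a : I) (b : K) (y : E) : L (labelMoment ((a, b), y)) ≤ φ b y :=
    Finset.le_sup' (fun a y => L (labelMoment ((a, b), y))) (Finset.mem_univ a) y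
  have convex_φ (b : K) : ConvexOn ℝ Set.univ (φ b) :=
    Finset.sup'_induction _ _ (fun _ h₁ _ h₂ => h₁.sup h₂)
      fun a _ => convexOn_clm_labelMoment L (a, b)
  have continuous_φ (b : K) : Continuous (φ b) :=
    Finset.sup'_induction _ _ (fun _ h₁ _ h₂ => h₁.sup h₂)
      fun a _ => L.continuous.comp (continuous_labelMoment (a, b))
  have integrable_φ {U : Ω → E} (hU : Integrable U P) (b : K) : Integrable (fun ω => φ b (U ω)) P :=
    Finset.sup'_induction (p := fun f : E → ℝ => Integrable (fun ω => f (U ω)) P) _ _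
      (fun _ h₁ _ h₂ => h₁.sup h₂) fun a _ =>
        L.integrable_comp (integrable_labelMoment measurable_const hU)
  have hiX := integrable_labelMoment (hi.prodMk hk') hX
  refine ⟨j, hj, ?_⟩
  calc ∫ ω, L (labelMoment ((i ω, k ω), X ω)) ∂P
    _ ≤ ∫ ω, φ (k ω) (X ω) ∂P := by
        exact integral_mono (L.integrable_comp hiX)
          (integrable_apply_fiber hk' (integrable_φ hX)) fun ω => le_φ _ _ _
    _ ≤ ∫ ω, φ (k ω) (Y ω) ∂P :=
        h.integral_le_of_finite hm hk convex_φ continuous_φ (integrable_φ hX) (integrable_φ hY)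
    _ = ∫ ω, L (labelMoment ((j ω, k ω), Y ω)) ∂P := by
        refine integral_congr_ae (Eventually.of_forall fun ω => le_antisymm ?_ (le_φ _ _ _))
        exact (Finset.sup'_apply ..).trans_le (Finset.sup'_le _ _ fun a _ => hle ω a)

theorem CondConvexOrder.exists_norm_integral_labelMoment_sub_lt [CompleteSpace E] [Fintype I]
    [Fintype K] (hm : m ≤ mΩ) [IsProbabilityMeasure P] {X Y : Ω → E} (h : CondConvexOrder P m X Y)
    (hX : Integrable X P) (hYm : Measurable Y) (hY : Integrable Y P)
    {i : Ω → I} (hi : Measurable i) {k : Ω → K} (hk : Measurable[m] k) {ε : ℝ} (hε : 0 < ε) :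
    ∃ ρ : Measure (I × Ω), ρ.map Prod.snd = P ∧
      ‖∫ p, labelMoment ((p.1, k p.2), Y p.2) ∂ρ - ∫ ω, labelMoment ((i ω, k ω), X ω) ∂P‖ < ε := by
  have hk' : Measurable k := hk.mono hm le_rfl
  have hg : Measurable fun p : I × Ω => labelMoment ((p.1, k p.2), Y p.2) :=
    measurable_labelMoment.comp (by fun_prop)
  suffices hmem : ∫ ω, labelMoment ((i ω, k ω), X ω) ∂P ∈ closure {c | ∃ ρ : Measure (I × Ω),
      ρ.map Prod.snd = P ∧ Integrable (fun p : I × Ω => labelMoment ((p.1, k p.2), Y p.2)) ρ ∧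
        ∫ p, labelMoment ((p.1, k p.2), Y p.2) ∂ρ = c} by
    obtain ⟨_, ⟨ρ, hρ, -, rfl⟩, hdist⟩ := Metric.mem_closure_iff.1 hmem ε hε
    exact ⟨ρ, hρ, by rwa [dist_comm, dist_eq_norm] at hdist⟩
  refine mem_closure_of_convex_of_forall_exists_le
    (convex_setOf_integral_of_map_eq measurable_snd P _) fun L => ?_
  obtain ⟨j, hj, hle⟩ := h.exists_integral_clm_labelMoment_le hm hX hYm hY hi hk L
  have hiX := integrable_labelMoment (hi.prodMk hk') hX
  have hjY := integrable_labelMoment (hj.prodMk hk') hY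
  have hjm : Measurable fun ω => (j ω, ω) := hj.prodMk measurable_id
  refine ⟨_, ⟨P.map fun ω => (j ω, ω), ?_, ?_, rfl⟩, ?_⟩
  · rw [Measure.map_map measurable_snd hjm]
    exact Measure.map_id
  · exact (integrable_map_measure hg.aestronglyMeasurable hjm.aemeasurable).2 hjY
  · rwa [integral_map hjm.aemeasurable hg.aestronglyMeasurable, ← L.integral_comp_comm hiX,
      ← L.integral_comp_comm hjY]

theorem CondConvexOrder.exists_norm_integral_smul_sub_le [CompleteSpace E] [Finite I] [Finite K]
    (hm : m ≤ mΩ) [IsProbabilityMeasure P] {X Y : Ω → E} (h : CondConvexOrder P m X Y)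
    (hX : Integrable X P) (hYm : Measurable Y) (hY : Integrable Y P) {i : Ω → I} (hi : Measurable i)
    {k : Ω → K} (hk : Measurable[m] k) {ε : ℝ} (hε : 0 < ε) :
    ∃ ρ : Measure (I × Ω), ρ.map Prod.snd = P ∧
      ∀ (c : I × K → ℝ) (C : ℝ), (∀ a, ‖c a‖ ≤ C) →
        ‖∫ p, c (p.1, k p.2) • ((1 : ℝ), Y p.2) ∂ρ -
          ∫ ω, c (i ω, k ω) • ((1 : ℝ), X ω) ∂P‖ ≤ ε * C := by
  have := Fintype.ofFinite I
  have := Fintype.ofFinite K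
  have hk' : Measurable k := hk.mono hm le_rfl
  obtain ⟨ω₀⟩ := P.nonempty_of_neZero
  have : Nonempty K := ⟨k ω₀⟩
  have hcard : (0 : ℝ) < Fintype.card (I × K) := by exact_mod_cast Fintype.card_pos
  obtain ⟨ρ, hρ, hclose⟩ := h.exists_norm_integral_labelMoment_sub_lt hm hX hYm hY hi hk
    (div_pos hε hcard)
  have hprob : IsProbabilityMeasure (ρ.map Prod.snd) := hρ ▸ inferInstance
  have := Measure.isProbabilityMeasure_of_map (μ := ρ) Prod.snd
  have hYρ : Integrable (fun p : I × Ω => Y p.2) ρ := (hρ ▸ hY).comp_measurable measurable_snd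
  refine ⟨ρ, hρ, fun c C hc => ?_⟩
  have hC : 0 ≤ C := (norm_nonneg _).trans (hc (i ω₀, k ω₀))
  calc _ ≤ _ := norm_integral_smul_sub_le (measurable_fst.prodMk (hk'.comp measurable_snd)) hYρ
        (hi.prodMk hk') hX hc
    _ ≤ Fintype.card (I × K) * (C * (ε / Fintype.card (I × K))) := by
        gcongr
        exact hclose.le
    _ = ε * C := by field_simp

end FiniteApproximation

theorem CondConvexOrder.exists_norm_integral_simpleFunc_sub_le {E : Type*} [NormedAddCommGroup E]
    [NormedSpace ℝ E] [CompleteSpace E] [MeasurableSpace E] [BorelSpace E]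
    [SecondCountableTopology E] {Ω : Type*} {m mΩ : MeasurableSpace Ω} (hm : m ≤ mΩ) {P : Measure Ω}
    [IsProbabilityMeasure P] {X Y : Ω → E} (h : CondConvexOrder P m X Y) (hXm : Measurable X)
    (hX : Integrable X P) (hYm : Measurable Y) (hY : Integrable Y P) {T : Type*}
    [MeasurableSpace T] [MeasurableSingletonClass T] {W : Ω → T} (hW : Measurable[m] W)
    (s : SimpleFunc E E) (t : SimpleFunc T T) {ε : ℝ} (hε : 0 < ε) :
    ∃ ρ : Measure (E × Ω), ρ.map Prod.snd = P ∧
      ∀ (f : E × T → ℝ) (C : ℝ), Measurable f → (∀ q, ‖f q‖ ≤ C) →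
        ‖∫ p, f (p.1, t (W p.2)) • ((1 : ℝ), Y p.2) ∂ρ -
          ∫ ω, f (s (X ω), t (W ω)) • ((1 : ℝ), X ω) ∂P‖ ≤ ε * C := by
  have : Nonempty s.range := ⟨s 0, s.mem_range_self 0⟩
  let i (ω : Ω) : s.range := ⟨s (X ω), s.mem_range_self _⟩
  let k (ω : Ω) : t.range := ⟨t (W ω), t.mem_range_self _⟩
  have hi : Measurable i := (s.measurable.comp hXm).subtype_mk
  have hk : Measurable[m] k := (t.measurable.comp hW).subtype_mk
  obtain ⟨ρ, hρ, hclose⟩ := h.exists_norm_integral_smul_sub_le hm hX hYm hY hi hk hε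
  have hcoe : Measurable fun p : s.range × Ω => ((p.1 : E), p.2) := by fun_prop
  refine ⟨ρ.map fun p => (p.1, p.2), ?_, fun f C hf hC => ?_⟩
  · rwa [Measure.map_map measurable_snd hcoe]
  · have hW' : Measurable W := hW.mono hm le_rfl
    have hfm : Measurable fun p : E × Ω => f (p.1, t (W p.2)) • ((1 : ℝ), Y p.2) :=
      (hf.comp (measurable_fst.prodMk (t.measurable.comp (hW'.comp measurable_snd)))).smul
        (measurable_const.prodMk (hYm.comp measurable_snd))
    rw [integral_map hcoe.aemeasurable hfm.aestronglyMeasurable]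
    exact hclose (fun a => f (a.1, a.2)) C fun a => hC _

section WeakLimit

open scoped Topology BoundedContinuousFunction

theorem isTightMeasureSet_range_of_tendsto {A : Type*} [TopologicalSpace A] [PolishSpace A]
    [MeasurableSpace A] [BorelSpace A] {r : ℕ → ProbabilityMeasure A} {μ : ProbabilityMeasure A}
    (hr : Tendsto r atTop (𝓝 μ)) : IsTightMeasureSet (Set.range fun n => (r n : Measure A)) := by
  let := TopologicalSpace.upgradeIsCompletelyMetrizable A
  have hc := hr.isCompact_insert_range
  refine (isTightMeasureSet_of_isCompact_closure (S := insert μ (Set.range r))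
    (by rwa [hc.isClosed.closure_eq])).subset ?_
  rintro _ ⟨n, rfl⟩
  exact ⟨r n, Or.inr ⟨n, rfl⟩, rfl⟩

theorem exists_tendsto_subseq_of_tendsto_marginals {A B : Type*} [TopologicalSpace A]
    [PolishSpace A] [MeasurableSpace A] [BorelSpace A] [TopologicalSpace B] [PolishSpace B]
    [MeasurableSpace B] [BorelSpace B] {ρ : ℕ → ProbabilityMeasure (A × B)}
    {μ : ProbabilityMeasure A} {ν : ProbabilityMeasure B}
    (hμ : Tendsto (fun n => (ρ n).map measurable_fst.aemeasurable) atTop (𝓝 μ))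
    (hν : Tendsto (fun n => (ρ n).map measurable_snd.aemeasurable) atTop (𝓝 ν)) :
    ∃ π : ProbabilityMeasure (A × B), ∃ φ : ℕ → ℕ, StrictMono φ ∧
      Tendsto (ρ ∘ φ) atTop (𝓝 π) := by
  have htight : IsTightMeasureSet {x | ∃ r ∈ Set.range ρ, (r : Measure (A × B)) = x} := by
    refine IsTightMeasureSet.prodMk ((isTightMeasureSet_range_of_tendsto hμ).subset ?_)
      ((isTightMeasureSet_range_of_tendsto hν).subset ?_) <;>
    · rintro _ ⟨_, ⟨_, ⟨n, rfl⟩, rfl⟩, rfl⟩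
      exact ⟨n, rfl⟩
  obtain ⟨π, -, φ, hφ, hπ⟩ := (isCompact_closure_of_isTightMeasureSet htight).tendsto_subseq
    fun n => subset_closure ⟨n, rfl⟩
  exact ⟨π, φ, hφ, hπ⟩

theorem map_eq_of_tendsto_map {A B ι : Type*} [TopologicalSpace A] [MeasurableSpace A]
    [OpensMeasurableSpace A] [TopologicalSpace B] [MeasurableSpace B] [BorelSpace B]
    [HasOuterApproxClosed B] {l : Filter ι} [l.NeBot] {ρ : ι → ProbabilityMeasure A}
    {π : ProbabilityMeasure A} (hπ : Tendsto ρ l (𝓝 π)) {g : A → B} (hg : Continuous g)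
    {μ : ProbabilityMeasure B}
    (h : Tendsto (fun i => (ρ i).map hg.measurable.aemeasurable) l (𝓝 μ)) :
    (π : Measure A).map g = μ :=
  congrArg ProbabilityMeasure.toMeasure
    (tendsto_nhds_unique (((ProbabilityMeasure.continuous_map hg).tendsto π).comp hπ) h)

theorem tendsto_integral_posPart_sub_natCast {B : Type*} [MeasurableSpace B] {ν : Measure B}
    {b : B → ℝ} (hb : Integrable b ν) :
    Tendsto (fun N : ℕ => ∫ y, max (b y - N) 0 ∂ν) atTop (𝓝 0) := by
  suffices h : Tendsto (fun N : ℕ => ∫ y, max (b y - N) 0 ∂ν) atTop (𝓝 (∫ _, (0 : ℝ) ∂ν)) by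
    rwa [integral_zero] at h
  refine tendsto_integral_of_dominated_convergence (fun y => |b y|)
    (fun N => by fun_prop) hb.abs (fun N => ?_) ?_
  · refine Eventually.of_forall fun y => ?_
    rw [Real.norm_eq_abs, abs_of_nonneg (le_max_right _ _)]
    exact max_le (by linarith [le_abs_self (b y), N.cast_nonneg (α := ℝ)]) (abs_nonneg _)
  · refine Eventually.of_forall fun y => tendsto_const_nhds.congr' ?_
    filter_upwards [eventually_ge_atTop ⌈b y⌉₊] with N hN
    rw [max_eq_right (sub_nonpos.2 (Nat.ceil_le.1 hN))]

theorem abs_integral_sub_integral_clamp_le {α B : Type*} [MeasurableSpace α] [MeasurableSpace B]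
    {ρ : Measure α} [IsFiniteMeasure ρ] {ν : Measure B} {q : α → B} (hq : Measurable q)
    (hρ : ρ.map q = ν) {b : B → ℝ} (hb : Integrable b ν) {g : α → ℝ} (hg : AEStronglyMeasurable g ρ)
    (hgb : ∀ a, |g a| ≤ b (q a)) {N : ℝ} (hN : 0 ≤ N) :
    |∫ a, g a ∂ρ - ∫ a, max (-N) (min N (g a)) ∂ρ| ≤ ∫ y, max (b y - N) 0 ∂ν := by
  subst hρ
  have hbq : Integrable (fun a => b (q a)) ρ := hb.comp_measurable hq
  have hgi : Integrable g ρ := hbq.mono' hg (Eventually.of_forall hgb)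
  have hclamp : Integrable (fun a => max (-N) (min N (g a))) ρ :=
    (integrable_const _).sup ((integrable_const _).inf hgi)
  have hpos : Integrable (fun y => max (b y - N) 0) (ρ.map q) :=
    (hb.sub (integrable_const N)).pos_part
  rw [integral_map hq.aemeasurable hpos.aestronglyMeasurable, ← integral_sub hgi hclamp]
  refine (abs_integral_le_integral_abs).trans (integral_mono (hgi.sub hclamp).abs
    (hpos.comp_measurable hq) fun a => ?_)
  have hbound := abs_le.1 (hgb a)
  grind

theorem tendsto_integral_of_tendsto_of_map_eq {α B ι : Type*} [TopologicalSpace α]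
    [MeasurableSpace α] [OpensMeasurableSpace α] [MeasurableSpace B] {l : Filter ι}
    {ρ : ι → ProbabilityMeasure α} {π : ProbabilityMeasure α} (h : Tendsto ρ l (𝓝 π))
    {ν : Measure B} {q : α → B} (hq : Measurable q) (hρ : ∀ i, (ρ i : Measure α).map q = ν)
    (hπ : (π : Measure α).map q = ν) {b : B → ℝ} (hb : Integrable b ν) {g : α → ℝ}
    (hg : Continuous g) (hgb : ∀ a, |g a| ≤ b (q a)) :
    Tendsto (fun i => ∫ a, g a ∂(ρ i : Measure α)) l (𝓝 (∫ a, g a ∂(π : Measure α))) := by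
  rw [Metric.tendsto_nhds]
  intro ε hε
  obtain ⟨N, hN⟩ := ((tendsto_integral_posPart_sub_natCast hb).eventually_lt_const
    (show 0 < ε / 3 by positivity)).exists
  have hN0 : (0 : ℝ) ≤ N := N.cast_nonneg
  let c : α →ᵇ ℝ := BoundedContinuousFunction.ofNormedAddCommGroup
    (fun a => max (-(N : ℝ)) (min N (g a))) (by fun_prop) N fun a =>
      abs_le.2 ⟨le_max_left _ _, max_le (by linarith) (min_le_left _ _)⟩
  have hclamp {r : ProbabilityMeasure α} (hr : (r : Measure α).map q = ν) :
      |∫ a, g a ∂(r : Measure α) - ∫ a, c a ∂(r : Measure α)| < ε / 3 :=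
    (abs_integral_sub_integral_clamp_le hq hr hb hg.aestronglyMeasurable hgb hN0).trans_lt hN
  filter_upwards [Metric.tendsto_nhds.1
    (ProbabilityMeasure.tendsto_iff_forall_integral_tendsto.1 h c) _
    (show 0 < ε / 3 by positivity)] with i hi
  rw [Real.dist_eq] at hi ⊢
  have hρi := hclamp (hρ i)
  have hπ' := hclamp hπ
  grind [abs_lt]

theorem ae_eq_zero_of_forall_integral_boundedContinuous_smul_eq_zero {α F : Type*}
    [TopologicalSpace α] [HasOuterApproxClosed α] [MeasurableSpace α] [BorelSpace α]
    [NormedAddCommGroup F] [NormedSpace ℝ F] [CompleteSpace F] {μ : Measure α} {g : α → F}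
    (hg : Integrable g μ) (h : ∀ f : α →ᵇ ℝ, ∫ a, f a • g a ∂μ = 0) : g =ᵐ[μ] 0 := by
  refine ae_eq_zero_of_forall_setIntegral_isClosed_eq_zero hg fun s hs => ?_
  have hlim : Tendsto (fun n => ∫ a, hs.apprSeq n a • g a ∂μ) atTop (𝓝 (∫ a in s, g a ∂μ)) := by
    rw [← integral_indicator hs.measurableSet]
    refine tendsto_integral_of_dominated_convergence (fun a => ‖g a‖)
      (fun n => by fun_prop) hg.norm (fun n => ?_) ?_
    · refine Eventually.of_forall fun a => ?_
      rw [NNReal.smul_def, norm_smul, NNReal.norm_eq]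
      exact mul_le_of_le_one_left (norm_nonneg _)
        (by exact_mod_cast HasOuterApproxClosed.apprSeq_apply_le_one hs n a)
    · refine Eventually.of_forall fun a => ?_
      have := (tendsto_pi_nhds.1 (HasOuterApproxClosed.tendsto_apprSeq hs) a).smul_const (g a)
      simpa only [← Set.indicator_smul_apply_left, one_smul] using this
  refine tendsto_nhds_unique hlim (tendsto_const_nhds.congr fun n => ?_)
  exact (h ((hs.apprSeq n).comp _ NNReal.isometry_coe.lipschitz)).symm

theorem tendsto_integral_boundedContinuous_smul {Ω α F : Type*} [MeasurableSpace Ω]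
    {P : Measure Ω} [TopologicalSpace α] [MeasurableSpace α] [OpensMeasurableSpace α]
    [NormedAddCommGroup F] [NormedSpace ℝ F] {U : ℕ → Ω → α} {V : Ω → α}
    (hU : ∀ n, Measurable (U n)) (hUV : ∀ ω, Tendsto (fun n => U n ω) atTop (𝓝 (V ω)))
    {g : Ω → F} (hg : Integrable g P) (f : α →ᵇ ℝ) :
    Tendsto (fun n => ∫ ω, f (U n ω) • g ω ∂P) atTop (𝓝 (∫ ω, f (V ω) • g ω ∂P)) := by
  refine tendsto_integral_of_dominated_convergence (fun ω => ‖f‖ * ‖g ω‖)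
    (fun n => (f.continuous.measurable.comp (hU n)).aestronglyMeasurable.smul
      hg.aestronglyMeasurable) (hg.norm.const_mul _) (fun n => ?_) ?_
  · exact Eventually.of_forall fun ω => by grw [norm_smul, f.norm_coe_le_norm]
  · exact Eventually.of_forall fun ω =>
      ((f.continuous.tendsto _).comp (hUV ω)).smul_const _

theorem integrable_boundedContinuous_smul {Ω α F : Type*} [MeasurableSpace Ω]
    {P : Measure Ω} [TopologicalSpace α] [MeasurableSpace α] [OpensMeasurableSpace α]
    [NormedAddCommGroup F] [NormedSpace ℝ F] {U : Ω → α} (hU : Measurable U)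
    {g : Ω → F} (hg : Integrable g P) (f : α →ᵇ ℝ) : Integrable (fun ω => f (U ω) • g ω) P :=
  hg.bdd_smul ‖f‖ (f.continuous.measurable.comp hU).aestronglyMeasurable
    (Eventually.of_forall fun ω => f.norm_coe_le_norm (U ω))

theorem fst_integral_smul_one_prod {Ω α F : Type*} [MeasurableSpace Ω] {P : Measure Ω}
    [IsFiniteMeasure P] [TopologicalSpace α] [MeasurableSpace α] [OpensMeasurableSpace α]
    [NormedAddCommGroup F] [NormedSpace ℝ F] [CompleteSpace F] {U : Ω → α} (hU : Measurable U)
    {g : Ω → F} (hg : Integrable g P) (f : α →ᵇ ℝ) :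
    (∫ ω, f (U ω) • ((1 : ℝ), g ω) ∂P).1 = ∫ a, f a ∂(P.map U) := by
  rw [fst_integral (integrable_boundedContinuous_smul hU ((integrable_const (1 : ℝ)).prodMk hg) f),
    integral_map hU.aemeasurable f.continuous.measurable.aestronglyMeasurable]
  simp only [Prod.smul_fst, smul_eq_mul, mul_one]

theorem snd_integral_smul_one_prod {Ω α F : Type*} [MeasurableSpace Ω] {P : Measure Ω}
    [IsFiniteMeasure P] [TopologicalSpace α] [MeasurableSpace α] [OpensMeasurableSpace α]
    [NormedAddCommGroup F] [NormedSpace ℝ F] {U : Ω → α} (hU : Measurable U) {g : Ω → F}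
    (hg : Integrable g P) (f : α →ᵇ ℝ) :
    (∫ ω, f (U ω) • ((1 : ℝ), g ω) ∂P).2 = ∫ ω, f (U ω) • g ω ∂P :=
  snd_integral (integrable_boundedContinuous_smul hU ((integrable_const (1 : ℝ)).prodMk hg) f)

theorem integral_smul_eq_of_tendsto {α E ι : Type*} [TopologicalSpace α] [MeasurableSpace α]
    [OpensMeasurableSpace α] [NormedAddCommGroup E] [NormedSpace ℝ E] [CompleteSpace E]
    [SecondCountableTopology E] [MeasurableSpace E] [BorelSpace E] {l : Filter ι} [l.NeBot]
    {ρ : ι → ProbabilityMeasure (α × E)} {π : ProbabilityMeasure (α × E)} (hπ : Tendsto ρ l (𝓝 π))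
    {ν : Measure E} (hν : Integrable id ν) (hρν : ∀ i, (ρ i : Measure (α × E)).map Prod.snd = ν)
    (hπν : (π : Measure (α × E)).map Prod.snd = ν) {f : α →ᵇ ℝ} {v : E}
    (h : Tendsto (fun i => ∫ p, f p.1 • p.2 ∂(ρ i : Measure (α × E))) l (𝓝 v)) :
    ∫ p, f p.1 • p.2 ∂(π : Measure (α × E)) = v := by
  have hint {r : ProbabilityMeasure (α × E)} (hr : (r : Measure (α × E)).map Prod.snd = ν) :
      Integrable (fun p => f p.1 • p.2) (r : Measure (α × E)) :=
    integrable_boundedContinuous_smul measurable_fst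
      ((hr.symm ▸ hν : Integrable id _).comp_measurable measurable_snd) f
  refine (SeparatingDual.eq_iff_forall_dual_eq (R := ℝ)).2 fun L => ?_
  refine tendsto_nhds_unique ?_ ((L.continuous.tendsto v).comp h)
  rw [← L.integral_comp_comm (hint hπν)]
  refine (tendsto_integral_of_tendsto_of_map_eq hπ measurable_snd hρν hπν
    ((hν.norm.const_mul ‖L‖).const_mul ‖f‖) (by fun_prop) fun p => ?_).congr fun i =>
      L.integral_comp_comm (hint (hρν i))
  rw [map_smul, smul_eq_mul, abs_mul]
  exact mul_le_mul (f.norm_coe_le_norm _) (L.le_opNorm _) (abs_nonneg _) (norm_nonneg _)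

variable {E : Type*} [NormedAddCommGroup E] [NormedSpace ℝ E] [CompleteSpace E]
  [SecondCountableTopology E] [MeasurableSpace E] [BorelSpace E]
  {T : Type*} [TopologicalSpace T] [PolishSpace T] [MeasurableSpace T] [BorelSpace T]
  {Ω : Type*} {m mΩ : MeasurableSpace Ω} {P : Measure Ω} [IsProbabilityMeasure P]

theorem CondConvexOrder.exists_seq_tendsto (hm : m ≤ mΩ) {X Y : Ω → E}
    (h : CondConvexOrder P m X Y) (hXm : Measurable X) (hX : Integrable X P) (hYm : Measurable Y)
    (hY : Integrable Y P) {W : Ω → T} (hW : Measurable[m] W) :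
    ∃ (ρ : ℕ → ProbabilityMeasure ((E × T) × E)) (t : ℕ → SimpleFunc T T),
      (∀ x, Tendsto (fun n => t n x) atTop (𝓝 x)) ∧
      (∀ n, (ρ n : Measure ((E × T) × E)).map (fun p => (p.2, p.1.2)) =
        P.map fun ω => (Y ω, t n (W ω))) ∧
      ∀ f : E × T →ᵇ ℝ,
        Tendsto (fun n => ∫ p, f p.1 • ((1 : ℝ), p.2) ∂(ρ n : Measure ((E × T) × E))) atTop
          (𝓝 (∫ ω, f (X ω, W ω) • ((1 : ℝ), X ω) ∂P)) := by
  have hW' : Measurable W := hW.mono hm le_rfl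
  let s := (stronglyMeasurable_id (α := E)).approx
  let t := (stronglyMeasurable_id (α := T)).approx
  have hs (x : E) : Tendsto (fun n => s n x) atTop (𝓝 x) := stronglyMeasurable_id.tendsto_approx x
  have ht (x : T) : Tendsto (fun n => t n x) atTop (𝓝 x) := stronglyMeasurable_id.tendsto_approx x
  choose r hr hclose using fun n : ℕ => h.exists_norm_integral_simpleFunc_sub_le hm hXm hX hYm hY
    hW (s n) (t n) (Nat.one_div_pos_of_nat (α := ℝ) (n := n))
  let J (n : ℕ) (p : E × Ω) : (E × T) × E := ((p.1, t n (W p.2)), Y p.2)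
  have hJ (n : ℕ) : Measurable (J n) := by fun_prop
  have hrprob (n : ℕ) : IsProbabilityMeasure (r n) := by
    have : IsProbabilityMeasure ((r n).map Prod.snd) := (hr n).symm ▸ inferInstance
    exact Measure.isProbabilityMeasure_of_map Prod.snd
  refine ⟨fun n => ⟨(r n).map (J n), Measure.isProbabilityMeasure_map (hJ n).aemeasurable⟩, t, ht,
    fun n => ?_, fun f => ?_⟩
  · rw [← hr n]
    change ((r n).map (J n)).map _ = _
    rw [Measure.map_map (by fun_prop) (hJ n), Measure.map_map (by fun_prop) measurable_snd]
    rfl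
  · have hlim := tendsto_integral_boundedContinuous_smul (P := P)
      (U := fun n ω => (s n (X ω), t n (W ω))) (fun n => by fun_prop)
      (fun ω => (hs (X ω)).prodMk_nhds (ht (W ω)))
      ((integrable_const (1 : ℝ)).prodMk hX) f
    refine tendsto_of_tendsto_of_dist hlim (squeeze_zero (g := fun n : ℕ => 1 / ((n : ℝ) + 1) * ‖f‖)
      (fun _ => dist_nonneg) (fun n => ?_) ?_)
    · change dist _ (∫ p, _ ∂(r n).map (J n)) ≤ _
      rw [dist_comm, dist_eq_norm, integral_map (hJ n).aemeasurable (by fun_prop)]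
      exact hclose n f ‖f‖ f.continuous.measurable f.norm_coe_le_norm
    · simpa only [zero_mul] using
        (tendsto_one_div_add_atTop_nhds_zero_nat (𝕜 := ℝ)).mul_const ‖f‖

theorem CondConvexOrder.exists_seq_tendsto_marginals (hm : m ≤ mΩ) {X Y : Ω → E}
    (h : CondConvexOrder P m X Y) (hXm : Measurable X) (hX : Integrable X P) (hYm : Measurable Y)
    (hY : Integrable Y P) {W : Ω → T} (hW : Measurable[m] W) {μ ν : ProbabilityMeasure (E × T)}
    (hμ : P.map (fun ω => (X ω, W ω)) = μ) (hν : P.map (fun ω => (Y ω, W ω)) = ν) :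
    ∃ ρ : ℕ → ProbabilityMeasure ((E × T) × E),
      (∀ n, (ρ n : Measure ((E × T) × E)).map Prod.snd = P.map Y) ∧
      Tendsto (fun n => (ρ n).map measurable_fst.aemeasurable) atTop (𝓝 μ) ∧
      Tendsto (fun n => (ρ n).map (f := fun p => (p.2, p.1.2)) (by fun_prop)) atTop (𝓝 ν) ∧
      ∀ f : E × T →ᵇ ℝ, Tendsto (fun n => ∫ p, f p.1 • p.2 ∂(ρ n : Measure ((E × T) × E))) atTop
        (𝓝 (∫ ω, f (X ω, W ω) • X ω ∂P)) := by
  have hW' : Measurable W := hW.mono hm le_rfl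
  have hXW : Measurable fun ω => (X ω, W ω) := hXm.prodMk hW'
  obtain ⟨ρ, t, ht, hρYW, hρ⟩ := h.exists_seq_tendsto hm hXm hX hYm hY hW
  have hρY (n : ℕ) : (ρ n : Measure ((E × T) × E)).map Prod.snd = P.map Y := by
    have := congrArg (Measure.map Prod.fst) (hρYW n)
    rwa [Measure.map_map measurable_fst (by fun_prop), Measure.map_map measurable_fst
      (by fun_prop)] at this
  have hint (n : ℕ) : Integrable (fun p => p.2) (ρ n : Measure ((E × T) × E)) := by
    have : Integrable id ((ρ n : Measure ((E × T) × E)).map Prod.snd) :=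
      hρY n ▸ (integrable_map_measure aestronglyMeasurable_id hYm.aemeasurable).2 hY
    exact this.comp_measurable measurable_snd
  refine ⟨ρ, hρY, ?_, ?_, fun f => ?_⟩
  · refine ProbabilityMeasure.tendsto_iff_forall_integral_tendsto.2 fun f => ?_
    have := (continuous_fst.tendsto _).comp (hρ f)
    rw [fst_integral_smul_one_prod hXW hX, hμ] at this
    exact this.congr fun n => fst_integral_smul_one_prod measurable_fst (hint n) f
  · have hdist := (tendstoInDistribution_of_ae_tendsto (μ' := P)
      (X := fun n ω => (Y ω, t n (W ω))) (fun n => by fun_prop) (hYm.prodMk hW').aemeasurable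
      (Eventually.of_forall fun ω => tendsto_const_nhds.prodMk_nhds (ht (W ω)))).tendsto
    have hlim : (⟨P.map fun ω => (Y ω, W ω), hν ▸ inferInstance⟩ : ProbabilityMeasure _) = ν :=
      Subtype.ext hν
    exact (hlim ▸ hdist).congr fun n => Subtype.ext (hρYW n).symm
  · have := (continuous_snd.tendsto _).comp (hρ f)
    rw [snd_integral_smul_one_prod hXW hX] at this
    exact this.congr fun n => snd_integral_smul_one_prod measurable_fst (hint n) f

theorem CondConvexOrder.exists_coupling_integral_smul_eq (hm : m ≤ mΩ) {X Y : Ω → E}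
    (h : CondConvexOrder P m X Y) (hXm : Measurable X) (hX : Integrable X P) (hYm : Measurable Y)
    (hY : Integrable Y P) {W : Ω → T} (hW : Measurable[m] W) :
    ∃ π : Measure ((E × T) × E), π.fst = P.map (fun ω => (X ω, W ω)) ∧
      π.map (fun p => (p.2, p.1.2)) = P.map (fun ω => (Y ω, W ω)) ∧
      ∀ f : E × T →ᵇ ℝ, ∫ p, f p.1 • p.2 ∂π = ∫ ω, f (X ω, W ω) • X ω ∂P := by
  have law {U : Ω → E} (hU : Measurable U) : IsProbabilityMeasure (P.map fun ω => (U ω, W ω)) :=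
    Measure.isProbabilityMeasure_map (hU.prodMk (hW.mono hm le_rfl)).aemeasurable
  let ν : ProbabilityMeasure E := ⟨P.map Y, Measure.isProbabilityMeasure_map hYm.aemeasurable⟩
  obtain ⟨ρ, hρY, hρXW, hρYW, hρ⟩ := h.exists_seq_tendsto_marginals hm hXm hX hYm hY hW
    (μ := ⟨_, law hXm⟩) (ν := ⟨_, law hYm⟩) rfl rfl
  have hν : Tendsto (fun n => (ρ n).map measurable_snd.aemeasurable) atTop (𝓝 ν) :=
    tendsto_const_nhds.congr fun n => Subtype.ext (hρY n).symm
  obtain ⟨π, φ, hφ, hπ⟩ := exists_tendsto_subseq_of_tendsto_marginals hρXW hν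
  have hφ' := hφ.tendsto_atTop
  refine ⟨π, map_eq_of_tendsto_map hπ continuous_fst (hρXW.comp hφ'),
    map_eq_of_tendsto_map hπ (by fun_prop) (hρYW.comp hφ'), fun f => ?_⟩
  exact integral_smul_eq_of_tendsto hπ
    ((integrable_map_measure aestronglyMeasurable_id hYm.aemeasurable).2 hY) (fun n => hρY (φ n))
    (map_eq_of_tendsto_map hπ continuous_snd (hν.comp hφ')) ((hρ f).comp hφ')

end WeakLimit

section MartingaleKernel

open scoped ENNReal BoundedContinuousFunction

variable {Ω S : Type*} {m mΩ : MeasurableSpace Ω} {P : Measure Ω} [IsProbabilityMeasure P]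
  [MeasurableSpace S] {Z : Ω → S}

theorem condExp_ae_eq_condExp_iff_setIntegral_eq {P : Measure Ω}
    (hm : m ≤ mΩ) [SigmaFinite (P.trim hm)] {f g : Ω → ℝ} (hf : Integrable f P)
    (hg : Integrable g P) :
    P[f | m] =ᵐ[P] P[g | m] ↔
      ∀ s, MeasurableSet[m] s → ∫ ω in s, f ω ∂P = ∫ ω in s, g ω ∂P := by
  have hle := condExp_le_condExp_iff_setIntegral_le hm hf hg
  have hge := condExp_le_condExp_iff_setIntegral_le hm hg hf
  refine ⟨fun h s hs => (hle.1 h.le s hs).antisymm (hge.1 h.symm.le s hs), fun h => ?_⟩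
  exact (hle.2 fun s hs => (h s hs).le).antisymm (hge.2 fun s hs => (h s hs).ge)

theorem exists_measurable_comap_kernel {E : Type*} [MeasurableSpace E]
    [MeasurableSpace.CountablyGenerated E] (κ : Kernel S E) [IsMarkovKernel κ] :
    ∃ W : S → ℕ → ℝ≥0∞, Measurable W ∧ Measurable[MeasurableSpace.comap W inferInstance] κ := by
  obtain ⟨b, hb, hgen⟩ := MeasurableSpace.CountablyGenerated.isCountablyGenerated (α := E)
  have halg := isSetAlgebra_generateSetAlgebra (𝒜 := b)
  obtain ⟨A, hA⟩ := (countable_generateSetAlgebra hb).exists_eq_range ⟨_, halg.empty_mem⟩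
  rw [← generateFrom_generateSetAlgebra_eq, hA] at hgen
  have hAm (n : ℕ) : MeasurableSet (A n) := by
    rw [hgen]
    exact .basic _ ⟨n, rfl⟩
  refine ⟨fun z n => κ z (A n), measurable_pi_iff.2 fun n => κ.measurable_coe (hAm n), ?_⟩
  refine Measurable.measure_of_isPiSystem_of_isProbabilityMeasure (mα := .comap _ _) hgen
    (fun s hs t ht _ => hA ▸ halg.inter_mem (hA ▸ hs) (hA ▸ ht)) ?_
  rintro _ ⟨n, rfl⟩
  exact (measurable_pi_apply n).comp (comap_measurable fun z n => κ z (A n))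

theorem stronglyMeasurable_integral_measure {A E : Type*} {_ : MeasurableSpace A}
    [MeasurableSpace E] {κ : A → Measure E} [hp : ∀ a, IsProbabilityMeasure (κ a)]
    (hκ : Measurable κ) {f : A × E → ℝ} (hf : Measurable f) :
    StronglyMeasurable fun a => ∫ u, f (a, u) ∂κ a := by
  let k : Kernel A E := ⟨κ, hκ⟩
  have : IsMarkovKernel k := ⟨hp⟩
  exact hf.stronglyMeasurable.integral_kernel_prod_right' (κ := k)

theorem condExp_comap_comp_ae_eq {E T : Type*} [MeasurableSpace E] [StandardBorelSpace E]
    [Nonempty E] [MeasurableSpace T] {U : Ω → E} (hU : Measurable U) (hZ : Measurable Z)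
    {W : S → T} (hW : Measurable W)
    (hκ : Measurable[MeasurableSpace.comap W inferInstance] (condDistrib U Z P))
    {g : T × E → ℝ} (hg : Measurable g) (hgi : Integrable (fun ω => g (W (Z ω), U ω)) P) :
    P[(fun ω => g (W (Z ω), U ω)) | MeasurableSpace.comap (W ∘ Z) inferInstance] =ᵐ[P]
      P[(fun ω => g (W (Z ω), U ω)) | MeasurableSpace.comap Z inferInstance] := by
  have hle : MeasurableSpace.comap (W ∘ Z) inferInstance ≤ MeasurableSpace.comap Z inferInstance :=
    MeasurableSpace.comap_comp.symm.trans_le (MeasurableSpace.comap_mono hW.comap_le)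
  have hcond := condExp_prod_ae_eq_integral_condDistrib (f := fun p : S × E => g (W p.1, p.2)) hZ
    hU.aemeasurable (by fun_prop) hgi
  have hmeas : StronglyMeasurable[MeasurableSpace.comap (W ∘ Z) inferInstance]
      fun ω => ∫ u, g (W (Z ω), u) ∂condDistrib U Z P (Z ω) := by
    rw [← MeasurableSpace.comap_comp]
    exact (stronglyMeasurable_integral_measure hκ (f := fun p => g (W p.1, p.2)) (hg.comp (((
      comap_measurable W).comp measurable_fst).prodMk measurable_snd))).comp_measurable
        (comap_measurable Z)
  refine (condExp_condExp_of_le hle hZ.comap_le).symm.trans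
    (condExp_of_aestronglyMeasurable' (hle.trans hZ.comap_le) ?_ integrable_condExp)
  exact hmeas.aestronglyMeasurable.congr hcond.symm

section CondExp

variable {E F : Type*} [MeasurableSpace E] [MeasurableSpace F] {X : Ω → E} {Y : Ω → F}

theorem measureReal_map_compProd_prod (hX : Measurable X) (hZ : Measurable Z)
    (η : Kernel (E × S) F) [IsMarkovKernel η] {B : Set F} (hB : MeasurableSet B) {D : Set S}
    (hD : MeasurableSet D) :
    ((P.map (fun ω => (X ω, Z ω)) ⊗ₘ η).map (fun p => (p.2, p.1.2))).real (B ×ˢ D) =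
      ∫ ω in Z ⁻¹' D, (η (X ω, Z ω)).real B ∂P := by
  have hXZ := hX.prodMk hZ
  have hηB : Measurable fun q => η q B := η.measurable_coe hB
  have hrect : (fun p : (E × S) × F => (p.2, p.1.2)) ⁻¹' (B ×ˢ D) = (Prod.snd ⁻¹' D) ×ˢ B := by
    ext; simp [and_comm]
  rw [map_measureReal_apply (by fun_prop) (hB.prod hD), hrect, measureReal_def,
    Measure.compProd_apply_prod (measurable_snd hD) hB,
    setLIntegral_map (measurable_snd hD) hηB hXZ]
  exact (integral_toReal (hηB.comp hXZ).aemeasurable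
    (Eventually.of_forall fun ω => measure_lt_top _ _)).symm

theorem measureReal_map_prodMk_prod {P : Measure Ω} (hY : Measurable Y) (hZ : Measurable Z)
    {B : Set F} (hB : MeasurableSet B) {D : Set S} (hD : MeasurableSet D) :
    (P.map fun ω => (Y ω, Z ω)).real (B ×ˢ D) = ∫ ω in Z ⁻¹' D, (Y ⁻¹' B).indicator 1 ω ∂P := by
  rw [map_measureReal_apply (hY.prodMk hZ) (hB.prod hD), integral_indicator_one (hY hB),
    measureReal_restrict_apply (hY hB)]
  rfl

theorem integrable_measureReal_kernel (hX : Measurable X) (η : Kernel E F) [IsMarkovKernel η]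
    {B : Set F} (hB : MeasurableSet B) : Integrable (fun ω => (η (X ω)).real B) P :=
  .of_bound ((η.measurable_coe hB).comp hX).ennreal_toReal.aestronglyMeasurable 1
    (Eventually.of_forall fun _ =>
      (abs_of_nonneg measureReal_nonneg).trans_le measureReal_le_one)

theorem map_compProd_eq_iff_condExp_ae_eq (hX : Measurable X) (hY : Measurable Y)
    (hZ : Measurable Z) (η : Kernel (E × S) F) [IsMarkovKernel η] :
    (P.map (fun ω => (X ω, Z ω)) ⊗ₘ η).map (fun p => (p.2, p.1.2)) = P.map (fun ω => (Y ω, Z ω)) ↔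
      ∀ B, MeasurableSet B →
        P[(fun ω => (η (X ω, Z ω)).real B) | MeasurableSpace.comap Z inferInstance] =ᵐ[P]
          P[(Y ⁻¹' B).indicator 1 | MeasurableSpace.comap Z inferInstance] := by
  have : IsProbabilityMeasure (P.map fun ω => (X ω, Z ω)) :=
    Measure.isProbabilityMeasure_map (hX.prodMk hZ).aemeasurable
  have : IsProbabilityMeasure ((P.map (fun ω => (X ω, Z ω)) ⊗ₘ η).map fun p => (p.2, p.1.2)) :=
    Measure.isProbabilityMeasure_map (by fun_prop)
  have hcond {B : Set F} (hB : MeasurableSet B) := condExp_ae_eq_condExp_iff_setIntegral_eq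
    (P := P) hZ.comap_le (integrable_measureReal_kernel (hX.prodMk hZ) η hB)
    ((integrable_const 1).indicator (hY hB))
  constructor
  · refine fun h B hB => (hcond hB).2 ?_
    rintro _ ⟨D, hD, rfl⟩
    rw [← measureReal_map_compProd_prod hX hZ η hB hD, h]
    exact measureReal_map_prodMk_prod hY hZ hB hD
  · refine fun h => Measure.ext_prod fun {B D} hB hD => ?_
    rw [← measureReal_eq_measureReal_iff, measureReal_map_compProd_prod hX hZ η hB hD,
      measureReal_map_prodMk_prod hY hZ hB hD]
    exact (hcond hB).1 (h B hB) _ ⟨D, hD, rfl⟩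

end CondExp

section Banach

variable {E : Type*} [NormedAddCommGroup E] [NormedSpace ℝ E] [CompleteSpace E]
  [SecondCountableTopology E] [MeasurableSpace E] [BorelSpace E]

/-- A transition kernel from `(x, z)` to `y` which transports the law `ρ` of `(X, Z)` to the law `σ`
of `(Y, Z)`, keeping `z` fixed, and whose barycentre at `(x, z)` is `x`. -/
structure IsMartingaleKernel {T : Type*} [MeasurableSpace T] (ρ σ : Measure (E × T))
    (η : Kernel (E × T) E) : Prop where
  map_compProd_eq : (ρ ⊗ₘ η).map (fun p => (p.2, p.1.2)) = σ
  ae_integral_eq : ∀ᵐ q ∂ρ, ∫ y, y ∂η q = q.1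

theorem integral_condKernel_ae_eq {A : Type*} [TopologicalSpace A] [HasOuterApproxClosed A]
    [MeasurableSpace A] [BorelSpace A] {π : Measure (A × E)} [IsFiniteMeasure π] {q : A → E}
    (hq : Integrable q π.fst) (hπ : Integrable Prod.snd π)
    (h : ∀ f : A →ᵇ ℝ, ∫ p, f p.1 • p.2 ∂π = ∫ a, f a • q a ∂π.fst) :
    (fun a => ∫ y, y ∂π.condKernel a) =ᵐ[π.fst] q := by
  have hmean : Integrable (fun a => ∫ y, y ∂π.condKernel a) π.fst := hπ.integral_condKernel
  refine eventuallyEq_iff_sub.2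
    (ae_eq_zero_of_forall_integral_boundedContinuous_smul_eq_zero (hmean.sub hq) fun f => ?_)
  simp only [Pi.sub_apply, smul_sub]
  refine (integral_sub (integrable_boundedContinuous_smul measurable_id hmean f)
    (integrable_boundedContinuous_smul measurable_id hq f)).trans (sub_eq_zero.2 ?_)
  calc ∫ a, f a • ∫ y, y ∂π.condKernel a ∂π.fst
    _ = ∫ a, ∫ y, f a • y ∂π.condKernel a ∂π.fst := by
        exact integral_congr_ae (Eventually.of_forall fun a => (integral_smul (f a) _).symm)
    _ = ∫ p, f p.1 • p.2 ∂π :=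
        Measure.integral_condKernel (integrable_boundedContinuous_smul measurable_fst hπ f)
    _ = ∫ a, f a • q a ∂π.fst := h f

theorem CondConvexOrder.exists_isMartingaleKernel_of_polishSpace {T : Type*} [TopologicalSpace T]
    [PolishSpace T] [MeasurableSpace T] [BorelSpace T] (hm : m ≤ mΩ)
    {X Y : Ω → E} (h : CondConvexOrder P m X Y) (hXm : Measurable X) (hX : Integrable X P)
    (hYm : Measurable Y) (hY : Integrable Y P) {W : Ω → T} (hW : Measurable[m] W) :
    ∃ η : Kernel (E × T) E, IsMarkovKernel η ∧
      IsMartingaleKernel (P.map fun ω => (X ω, W ω)) (P.map fun ω => (Y ω, W ω)) η := by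
  obtain ⟨π, hπX, hπY, hπ⟩ := h.exists_coupling_integral_smul_eq hm hXm hX hYm hY hW
  have hXW : Measurable fun ω => (X ω, W ω) := hXm.prodMk (hW.mono hm le_rfl)
  have hYW : Measurable fun ω => (Y ω, W ω) := hYm.prodMk (hW.mono hm le_rfl)
  have : IsProbabilityMeasure π := by
    have : IsProbabilityMeasure π.fst := by
      rw [hπX]
      exact Measure.isProbabilityMeasure_map hXW.aemeasurable
    rw [Measure.fst] at this
    exact Measure.isProbabilityMeasure_of_map Prod.fst
  have hfst : Integrable Prod.fst π.fst := by
    rw [hπX]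
    exact (integrable_map_measure measurable_fst.aestronglyMeasurable hXW.aemeasurable).2 hX
  have hsnd : Integrable Prod.snd π := by
    have : Integrable Prod.fst (π.map fun p => (p.2, p.1.2)) := by
      rw [hπY]
      exact (integrable_map_measure measurable_fst.aestronglyMeasurable hYW.aemeasurable).2 hY
    exact this.comp_measurable (by fun_prop)
  refine ⟨π.condKernel, inferInstance, ?_, ?_⟩ <;> rw [← hπX]
  · rw [π.disintegrate, hπY]
  · refine integral_condKernel_ae_eq hfst hsnd fun f => ?_
    rw [hπ f, hπX]
    exact (integral_map hXW.aemeasurable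
      (f.continuous.smul continuous_fst).aestronglyMeasurable).symm

theorem CondConvexOrder.exists_isMartingaleKernel (hZ : Measurable Z) {X Y : Ω → E}
    (h : CondConvexOrder P (MeasurableSpace.comap Z inferInstance) X Y) (hXm : Measurable X)
    (hX : Integrable X P) (hYm : Measurable Y) (hY : Integrable Y P) :
    ∃ η : Kernel (E × S) E, IsMarkovKernel η ∧
      IsMartingaleKernel (P.map fun ω => (X ω, Z ω)) (P.map fun ω => (Y ω, Z ω)) η := by
  obtain ⟨W, hW, hκ⟩ := exists_measurable_comap_kernel (condDistrib (fun ω => (X ω, Y ω)) Z P)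
  obtain ⟨η, hη, hηmap, hηmean⟩ := h.exists_isMartingaleKernel_of_polishSpace hZ.comap_le hXm hX
    hYm hY (hW.comp (comap_measurable Z))
  have hG : Measurable fun q : E × S => (q.1, W q.2) := by fun_prop
  refine ⟨η.comap _ hG, inferInstance, ?_, ?_⟩
  · have hmap := (map_compProd_eq_iff_condExp_ae_eq hXm hYm (hW.comp hZ) η).1 hηmap
    refine (map_compProd_eq_iff_condExp_ae_eq hXm hYm hZ _).2 fun B hB => ?_
    have hsuff {g : (ℕ → ℝ≥0∞) × E × E → ℝ} (hg : Measurable g)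
        (hgi : Integrable (fun ω => g (W (Z ω), X ω, Y ω)) P) :=
      condExp_comap_comp_ae_eq (hXm.prodMk hYm) hZ hW hκ hg hgi
    have hX' := hsuff (g := fun p => (η (p.2.1, p.1)).real B)
      ((η.measurable_coe hB).comp (by fun_prop)).ennreal_toReal
      (integrable_measureReal_kernel (hXm.prodMk (hW.comp hZ)) η hB)
    have hY' := hsuff (g := fun p => B.indicator 1 p.2.2)
      ((measurable_one.indicator hB).comp (by fun_prop))
      ((integrable_const 1).indicator (hYm hB))
    exact hX'.symm.trans ((hmap B hB).trans hY')
  · have hlaw : P.map (fun ω => (X ω, W (Z ω))) =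
        (P.map fun ω => (X ω, Z ω)).map fun q => (q.1, W q.2) := by
      rw [Measure.map_map hG (hXm.prodMk hZ)]
      rfl
    refine ae_of_ae_map hG.aemeasurable (?_ : ∀ᵐ q ∂_, ∫ y, y ∂η q = q.1)
    rw [← hlaw]
    exact hηmean

end Banach

end MartingaleKernel

section Coupling

variable {E : Type*} [NormedAddCommGroup E] [NormedSpace ℝ E]

theorem IsMartingaleKernel.condExp_ae_eq [CompleteSpace E] [SecondCountableTopology E]
    [MeasurableSpace E] [BorelSpace E] {T : Type*} [MeasurableSpace T]
    {ρ σ : Measure (E × T)} [IsFiniteMeasure ρ] {η : Kernel (E × T) E} [IsMarkovKernel η]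
    (h : IsMartingaleKernel ρ σ η) (hσ : Integrable Prod.fst σ) :
    (fun p => p.1.1) =ᵐ[ρ ⊗ₘ η]
      (ρ ⊗ₘ η)[(fun p => p.2) | MeasurableSpace.comap (fun p => (p.1.1, p.1.2)) inferInstance] := by
  have hint : Integrable Prod.snd (ρ ⊗ₘ η) :=
    (h.map_compProd_eq ▸ hσ :).comp_measurable (f := fun p : (E × T) × E => (p.2, p.1.2))
      (by fun_prop)
  have hfst : (ρ ⊗ₘ η).map Prod.fst = ρ := Measure.fst_compProd _ _
  have hcond : condDistrib Prod.snd Prod.fst (ρ ⊗ₘ η) =ᵐ[(ρ ⊗ₘ η).map Prod.fst] η := by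
    refine condDistrib_ae_eq_of_measure_eq_compProd _ measurable_snd.aemeasurable ?_
    rw [hfst]
    exact Measure.map_id
  filter_upwards [condExp_ae_eq_integral_condDistrib' measurable_fst hint,
    ae_of_ae_map measurable_fst.aemeasurable hcond,
    ae_of_ae_map measurable_fst.aemeasurable (hfst.symm ▸ h.ae_integral_eq)] with p hp hη hmean
  exact (hp.trans (by rw [hη, hmean])).symm

theorem CondConvexOrder.of_ae_eq_condExp [CompleteSpace E] {Ω : Type*}
    {m m' mΩ : MeasurableSpace Ω} {P : Measure Ω} [IsFiniteMeasure P] {X Y : Ω → E} (hm : m ≤ m')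
    (hm' : m' ≤ mΩ) (hY : Integrable Y P) (h : X =ᵐ[P] P[Y | m']) : CondConvexOrder P m X Y := by
  intro φ hφ hφc hφX hφY
  have hJensen : (fun ω => φ (X ω)) ≤ᵐ[P] P[(fun ω => φ (Y ω)) | m'] := by
    filter_upwards [h, hφ.map_condExp_le_univ hm' hφc.lowerSemicontinuous hY hφY] with ω hω hle
    rwa [hω]
  exact (condExp_mono hφX integrable_condExp hJensen).trans_eq (condExp_condExp_of_le hm hm')

theorem setIntegral_preimage_eq_of_identDistrib {Ω Ω' α : Type*} {_ : MeasurableSpace Ω}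
    {_ : MeasurableSpace Ω'} [MeasurableSpace α] {P : Measure Ω} {P' : Measure Ω'} {U : Ω → α}
    {U' : Ω' → α} (h : IdentDistrib U' U P' P) {f : α → E} {A : Set α} (hA : MeasurableSet A)
    (hf : StronglyMeasurable f) :
    ∫ ω in U' ⁻¹' A, f (U' ω) ∂P' = ∫ ω in U ⁻¹' A, f (U ω) ∂P := by
  rw [← setIntegral_map hA hf.aestronglyMeasurable h.aemeasurable_fst, h.map_eq,
    setIntegral_map hA hf.aestronglyMeasurable h.aemeasurable_snd]

theorem CondConvexOrder.of_identDistrib [MeasurableSpace E] [OpensMeasurableSpace E]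
    {Ω Ω' S : Type*} {_ : MeasurableSpace Ω} {_ : MeasurableSpace Ω'} [MeasurableSpace S]
    {P : Measure Ω} [IsFiniteMeasure P] {P' : Measure Ω'} [IsFiniteMeasure P'] {X Y : Ω → E}
    {X' Y' : Ω' → E} {Z : Ω → S} {Z' : Ω' → S} (hZ : Measurable Z) (hZ' : Measurable Z')
    (hX : IdentDistrib (fun ω => (X' ω, Z' ω)) (fun ω => (X ω, Z ω)) P' P)
    (hY : IdentDistrib (fun ω => (Y' ω, Z' ω)) (fun ω => (Y ω, Z ω)) P' P)
    (h : CondConvexOrder P' (MeasurableSpace.comap Z' inferInstance) X' Y') :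
    CondConvexOrder P (MeasurableSpace.comap Z inferInstance) X Y := by
  intro φ hφ hφc hφX hφY
  have hφm : Measurable fun q : E × S => φ q.1 := hφc.measurable.comp measurable_fst
  have hφX' : Integrable (fun ω => φ (X' ω)) P' := (hX.comp hφm).integrable_iff.2 hφX
  have hφY' : Integrable (fun ω => φ (Y' ω)) P' := (hY.comp hφm).integrable_iff.2 hφY
  refine (condExp_le_condExp_iff_setIntegral_le hZ.comap_le hφX hφY).2 ?_
  rintro _ ⟨D, hD, rfl⟩
  calc ∫ ω in Z ⁻¹' D, φ (X ω) ∂P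
    _ = ∫ ω in Z' ⁻¹' D, φ (X' ω) ∂P' :=
        (setIntegral_preimage_eq_of_identDistrib hX (measurable_snd hD) hφm.stronglyMeasurable).symm
    _ ≤ ∫ ω in Z' ⁻¹' D, φ (Y' ω) ∂P' :=
        (condExp_le_condExp_iff_setIntegral_le hZ'.comap_le hφX' hφY').1
          (h φ hφ hφc hφX' hφY') _ ⟨D, hD, rfl⟩
    _ = ∫ ω in Z ⁻¹' D, φ (Y ω) ∂P :=
        setIntegral_preimage_eq_of_identDistrib hY (measurable_snd hD) hφm.stronglyMeasurable

theorem condConvexOrder_of_coupling [CompleteSpace E] [MeasurableSpace E] [BorelSpace E]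
    {Ω Ω' S : Type*} {_ : MeasurableSpace Ω} {_ : MeasurableSpace Ω'} [MeasurableSpace S]
    {P : Measure Ω} [IsFiniteMeasure P] {P' : Measure Ω'} [IsFiniteMeasure P'] {X Y : Ω → E}
    {X' Y' : Ω' → E} {Z : Ω → S} {Z' : Ω' → S} (hZ : Measurable Z) (hX' : Measurable X')
    (hZ' : Measurable Z') (hYi : Integrable Y P)
    (hXZ : IdentDistrib (fun ω => (X' ω, Z' ω)) (fun ω => (X ω, Z ω)) P' P)
    (hYZ : IdentDistrib (fun ω => (Y' ω, Z' ω)) (fun ω => (Y ω, Z ω)) P' P)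
    (h : X' =ᵐ[P'] P'[Y' | MeasurableSpace.comap (fun ω => (X' ω, Z' ω)) inferInstance]) :
    CondConvexOrder P (MeasurableSpace.comap Z inferInstance) X Y := by
  have hYi' : Integrable Y' P' := (hYZ.comp measurable_fst).integrable_iff.2 hYi
  have hle : MeasurableSpace.comap Z' inferInstance ≤
      MeasurableSpace.comap (fun ω => (X' ω, Z' ω)) inferInstance :=
    (measurable_snd.comp (comap_measurable fun ω => (X' ω, Z' ω))).comap_le
  exact .of_identDistrib hZ hZ' hXZ hYZ (.of_ae_eq_condExp hle (hX'.prodMk hZ').comap_le hYi' h)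

end Coupling

theorem condCXLe_iff_condConvexOrder {d : ℕ} {Ω : Type} {m _ : MeasurableSpace Ω} {P : Measure Ω}
    {X Y : Ω → Euc d} : CondCXLe P m X Y ↔ CondConvexOrder P m X Y :=
  ⟨fun h φ hφ _ => h φ hφ, fun h φ hφ => h φ hφ (continuousOn_univ.1 (hφ.continuousOn isOpen_univ))⟩

theorem conditional_strassen_cx_general.{u, v, w} {E : Type u} [NormedAddCommGroup E]
    [NormedSpace ℝ E] [CompleteSpace E] [SecondCountableTopology E] [MeasurableSpace E]
    [BorelSpace E] {Ω : Type v} [MeasurableSpace Ω] (P : Measure Ω) [IsProbabilityMeasure P]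
    {S : Type w} [MeasurableSpace S] (X Y : Ω → E) (Z : Ω → S) (hX : Measurable X)
    (hY : Measurable Y) (hZ : Measurable Z) (hXi : Integrable X P) (hYi : Integrable Y P) :
    CondConvexOrder P (MeasurableSpace.comap Z inferInstance) X Y ↔
      ∃ (Ω' : Type (max u w)) (_ : MeasurableSpace Ω') (P' : Measure Ω'),
        IsProbabilityMeasure P' ∧
        ∃ (X' Y' : Ω' → E) (Z' : Ω' → S),
          Measurable X' ∧ Measurable Y' ∧ Measurable Z' ∧
          P'.map (fun ω => (X' ω, Z' ω)) = P.map (fun ω => (X ω, Z ω)) ∧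
          P'.map (fun ω => (Y' ω, Z' ω)) = P.map (fun ω => (Y ω, Z ω)) ∧
          X' =ᵐ[P'] P'[Y' | MeasurableSpace.comap (fun ω => (X' ω, Z' ω)) inferInstance] := by
  constructor
  · intro h
    obtain ⟨η, _, hη⟩ := h.exists_isMartingaleKernel hZ hX hXi hY hYi
    have := Measure.isProbabilityMeasure_map (μ := P) (hX.prodMk hZ).aemeasurable
    have hσ : Integrable Prod.fst (P.map fun ω => (Y ω, Z ω)) :=
      (integrable_map_measure measurable_fst.aestronglyMeasurable
        (hY.prodMk hZ).aemeasurable).2 hYi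
    exact ⟨(E × S) × E, inferInstance, (P.map fun ω => (X ω, Z ω)) ⊗ₘ η, inferInstance,
      fun p => p.1.1, fun p => p.2, fun p => p.1.2, by fun_prop, by fun_prop, by fun_prop,
      Measure.fst_compProd _ _, hη.map_compProd_eq, hη.condExp_ae_eq hσ⟩
  · rintro ⟨Ω', _, P', _, X', Y', Z', hX', hY', hZ', hXlaw, hYlaw, hmart⟩
    exact condConvexOrder_of_coupling hZ hX' hZ' hYi
      ⟨(hX'.prodMk hZ').aemeasurable, (hX.prodMk hZ).aemeasurable, hXlaw⟩
      ⟨(hY'.prodMk hZ').aemeasurable, (hY.prodMk hZ).aemeasurable, hYlaw⟩ hmart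

/-- Conditional Strassen theorem (convex order): X | Z ≤cx Y | Z iff there is a
Z-conditional coupling (X̂, Ŷ, Ẑ) with X̂ = E(Ŷ | σ(X̂, Ẑ)) a.s. -/
theorem conditional_strassen_cx
    (d : ℕ) (hd : 1 ≤ d) {Ω : Type} [MeasurableSpace Ω] (P : Measure Ω)
    [IsProbabilityMeasure P] {S : Type} [MeasurableSpace S]
    (X Y : Ω → Euc d) (Z : Ω → S)
    (hX : Measurable X) (hY : Measurable Y) (hZ : Measurable Z)
    (hXi : Integrable X P) (hYi : Integrable Y P) :
    CondCXLe P (MeasurableSpace.comap Z inferInstance) X Y ↔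
      ∃ (Ω' : Type) (_ : MeasurableSpace Ω') (P' : Measure Ω'),
        IsProbabilityMeasure P' ∧
        ∃ (X' Y' : Ω' → Euc d) (Z' : Ω' → S),
          Measurable X' ∧ Measurable Y' ∧ Measurable Z' ∧
          P'.map (fun ω => (X' ω, Z' ω)) = P.map (fun ω => (X ω, Z ω)) ∧
          P'.map (fun ω => (Y' ω, Z' ω)) = P.map (fun ω => (Y ω, Z ω)) ∧
          X' =ᵐ[P'] P'[Y' | MeasurableSpace.comap (fun ω => (X' ω, Z' ω)) inferInstance] :=
  condCXLe_iff_condConvexOrder.trans (conditional_strassen_cx_general P X Y Z hX hY hZ hXi hYi)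
end
end

section
/- There exist countable families C of convex functions ℝ^d → ℝ and C⁺ of increasing convex functions ℝ^d → ℝ, each of whose members is Lipschitz, such that for all integrable random vectors X, Y in ℝ^d: X ≤cx Y if and only if E φ(X) ≤ E φ(Y) for all φ ∈ C, and X ≤icx Y if and only if E φ(X) ≤ E φ(Y) for all φ ∈ C⁺. -/
open MeasureTheory ProbabilityTheory Filter

noncomputable section

def CXLe2 {d : ℕ} {Ω Ω' : Type} {mΩ : MeasurableSpace Ω} {mΩ' : MeasurableSpace Ω'}
    (P : Measure Ω) (P' : Measure Ω') (X : Ω → Euc d) (Y : Ω' → Euc d) : Prop :=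
  ∀ φ : Euc d → ℝ, ConvexOn ℝ Set.univ φ →
    Integrable (fun ω => φ (X ω)) P → Integrable (fun ω => φ (Y ω)) P' →
    ∫ ω, φ (X ω) ∂P ≤ ∫ ω, φ (Y ω) ∂P'

def ICXLe2 {d : ℕ} {Ω Ω' : Type} {mΩ : MeasurableSpace Ω} {mΩ' : MeasurableSpace Ω'}
    (P : Measure Ω) (P' : Measure Ω') (X : Ω → Euc d) (Y : Ω' → Euc d) : Prop :=
  ∀ φ : Euc d → ℝ, ConvexOn ℝ Set.univ φ → CoordMono φ →
    Integrable (fun ω => φ (X ω)) P → Integrable (fun ω => φ (Y ω)) P' →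
    ∫ ω, φ (X ω) ∂P ≤ ∫ ω, φ (Y ω) ∂P'

/-!
A lower semicontinuous convex function is a countable supremum of continuous affine minorants, so
monotone convergence reduces the convex order to finite maxima of affine functions. Such maxima
are stable under perturbing their coefficients: moving each `(l, c)` by at most `ε` moves the
maximum by at most `ε * (1 + ‖x‖)`, which is integrable, so coefficients in a countable dense set
suffice. For the increasing order, the coefficients can be kept among increasing affine functions
because an affine minorant of an increasing function is itself increasing.
-/

open scoped Topology

section Lattice

variable {α : Type*} [SemilatticeSup α] {s : Set α}

theorem countable_supClosure (hs : s.Countable) : (supClosure s).Countable := by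
  classical
  have := hs.to_subtype
  let finiteSup (t : {t : Finset s // t.Nonempty}) : α := t.1.sup' t.2 (↑)
  have hmem : s ⊆ Set.range finiteSup := fun a ha => ⟨⟨{⟨a, ha⟩}, by simp⟩, by simp [finiteSup]⟩
  have hsup : SupClosed (Set.range finiteSup) := by
    rintro _ ⟨t, rfl⟩ _ ⟨u, rfl⟩
    exact ⟨⟨t.1 ∪ u.1, t.2.mono Finset.subset_union_left⟩, Finset.sup'_union t.2 u.2 _⟩
  exact (Set.countable_range finiteSup).mono (supClosure_min hmem hsup)

theorem partialSups_mem_supClosure {f : ℕ → α} (hf : ∀ i, f i ∈ s) (n : ℕ) :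
    partialSups f n ∈ supClosure s := by
  rw [partialSups_eq_sup'_range]
  exact finsetSup'_mem_supClosure _ fun i _ => hf i

end Lattice

theorem integrable_comp_of_lipschitzWith {Ω E F : Type*} {mΩ : MeasurableSpace Ω}
    [NormedAddCommGroup E] [NormedAddCommGroup F] {P : Measure Ω} [IsFiniteMeasure P]
    {X : Ω → E} (hX : Integrable X P) {φ : E → F} {K : NNReal} (hφ : LipschitzWith K φ) :
    Integrable (fun ω => φ (X ω)) P := by
  have hsub : LipschitzWith K fun x => φ x - φ 0 := by
    simpa using hφ.sub (LipschitzWith.const (φ 0))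
  have hint := hsub.comp_memLp (sub_self (φ 0)) (memLp_one_iff_integrable.2 hX)
  exact ((memLp_one_iff_integrable.1 hint).add (integrable_const (φ 0))).congr
    (ae_of_all P fun ω => sub_add_cancel (φ (X ω)) (φ 0))

theorem norm_integral_sub_integral_le {Ω G : Type*} {mΩ : MeasurableSpace Ω}
    [NormedAddCommGroup G] [NormedSpace ℝ G] {P : Measure Ω} {f g : Ω → G} {h : Ω → ℝ}
    (hf : Integrable f P) (hg : Integrable g P) (hh : Integrable h P)
    (hfg : ∀ᵐ ω ∂P, ‖f ω - g ω‖ ≤ h ω) : ‖∫ ω, f ω ∂P - ∫ ω, g ω ∂P‖ ≤ ∫ ω, h ω ∂P := by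
  rw [← integral_sub hf hg]
  exact norm_integral_le_of_norm_le hh hfg

/-- Translation by a vector of `V` does not decrease `φ`. For `V` the positive cone of an ordered
vector space this is monotonicity; for `V = ∅` it is no condition, so that the convex and the
increasing convex order can be treated together. -/
def MonotoneAlong {E β : Type*} [Add E] [LE β] (V : Set E) (φ : E → β) : Prop :=
  ∀ x, ∀ v ∈ V, φ x ≤ φ (x + v)

theorem MonotoneAlong.sup {E β : Type*} [Add E] [SemilatticeSup β] {V : Set E}
    {φ ψ : E → β} (hφ : MonotoneAlong V φ) (hψ : MonotoneAlong V ψ) : MonotoneAlong V (φ ⊔ ψ) :=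
  fun x v hv => sup_le_sup (hφ x v hv) (hψ x v hv)

theorem MonotoneAlong.le_add_nsmul {E β : Type*} [AddMonoid E] [Preorder β] {V : Set E}
    {φ : E → β} (hφ : MonotoneAlong V φ) (x : E) {v : E} (hv : v ∈ V) (n : ℕ) :
    φ x ≤ φ (x + n • v) := by
  induction n with
  | zero => simp
  | succ n ih => simpa only [succ_nsmul, add_assoc] using ih.trans (hφ (x + n • v) v hv)

section NormedSpace

variable {E : Type*} [NormedAddCommGroup E] [NormedSpace ℝ E]

/-- The continuous affine function with linear part `p.1` and value `p.2` at the origin. Encoding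
it by the pair makes the topology on coefficients that of `StrongDual ℝ E × ℝ`. -/
def affineFun (p : StrongDual ℝ E × ℝ) : E → ℝ := fun x => p.1 x + p.2

theorem convexOn_affineFun (p : StrongDual ℝ E × ℝ) : ConvexOn ℝ Set.univ (affineFun p) :=
  (p.1.toLinearMap.convexOn convex_univ).add (convexOn_const _ convex_univ)

theorem lipschitzWith_affineFun (p : StrongDual ℝ E × ℝ) :
    LipschitzWith ‖p.1‖₊ (affineFun p) :=
  (p.1.lipschitz.add (LipschitzWith.const p.2)).weaken (add_zero _).le

theorem abs_affineFun_sub_affineFun_le (p q : StrongDual ℝ E × ℝ) (x : E) :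
    |affineFun p x - affineFun q x| ≤ dist p q * (1 + ‖x‖) := by
  calc |affineFun p x - affineFun q x| = ‖(p - q).1 x + (p - q).2‖ := by
        simp only [affineFun, Prod.fst_sub, Prod.snd_sub, sub_apply, Real.norm_eq_abs]
        ring_nf
    _ ≤ ‖(p - q).1‖ * ‖x‖ + ‖(p - q).2‖ := norm_add_le_of_le ((p - q).1.le_opNorm x) le_rfl
    _ ≤ ‖p - q‖ * ‖x‖ + ‖p - q‖ := by
        gcongr
        exacts [norm_fst_le _, norm_snd_le _]
    _ = dist p q * (1 + ‖x‖) := by rw [dist_eq_norm]; ring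

-- Going far in the direction `-v` keeps `φ` bounded above, so the linear part cannot grow there.
theorem MonotoneAlong.affineFun_of_le {V : Set E} {φ : E → ℝ} (hφ : MonotoneAlong V φ)
    {p : StrongDual ℝ E × ℝ} (hp : affineFun p ≤ φ) : MonotoneAlong V (affineFun p) := by
  intro x v hv
  suffices 0 ≤ p.1 v by simpa [affineFun] using this
  by_contra! hneg
  obtain ⟨n, hn⟩ := exists_lt_nsmul (neg_pos.2 hneg) (φ 0 - p.2)
  have hminorant : n • -p.1 v + p.2 ≤ φ (-(n • v)) := by simpa [affineFun] using hp (-(n • v))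
  have hbounded : φ (-(n • v)) ≤ φ 0 := by simpa using hφ.le_add_nsmul (-(n • v)) hv n
  linarith

/-- The maxima of finitely many continuous affine functions with coefficients in `D`. -/
def maxAffine (D : Set (StrongDual ℝ E × ℝ)) : Set (E → ℝ) := supClosure (affineFun '' D)

theorem countable_maxAffine {D : Set (StrongDual ℝ E × ℝ)} (hD : D.Countable) :
    (maxAffine D).Countable :=
  countable_supClosure (hD.image _)

theorem convexOn_of_mem_maxAffine {D : Set (StrongDual ℝ E × ℝ)} {ψ : E → ℝ}
    (hψ : ψ ∈ maxAffine D) : ConvexOn ℝ Set.univ ψ :=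
  supClosure_min (t := {ψ | ConvexOn ℝ Set.univ ψ})
    (Set.image_subset_iff.2 fun p _ => convexOn_affineFun p) (fun _ hf _ hg => hf.sup hg) hψ

theorem exists_lipschitzWith_of_mem_maxAffine {D : Set (StrongDual ℝ E × ℝ)} {ψ : E → ℝ}
    (hψ : ψ ∈ maxAffine D) : ∃ K : NNReal, LipschitzWith K ψ :=
  supClosure_min (t := {ψ | ∃ K : NNReal, LipschitzWith K ψ})
    (Set.image_subset_iff.2 fun p _ => ⟨_, lipschitzWith_affineFun p⟩)
    (fun _ ⟨_, hf⟩ _ ⟨_, hg⟩ => ⟨_, hf.max hg⟩) hψ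

theorem monotoneAlong_of_mem_maxAffine {V : Set E} {D : Set (StrongDual ℝ E × ℝ)}
    (hD : ∀ p ∈ D, MonotoneAlong V (affineFun p)) {ψ : E → ℝ} (hψ : ψ ∈ maxAffine D) :
    MonotoneAlong V ψ :=
  supClosure_min (t := {ψ | MonotoneAlong V ψ}) (Set.image_subset_iff.2 hD)
    (fun _ hf _ hg => hf.sup hg) hψ

theorem exists_mem_maxAffine_abs_sub_le {D D' : Set (StrongDual ℝ E × ℝ)} (h : D' ⊆ closure D)
    {ψ : E → ℝ} (hψ : ψ ∈ maxAffine D') {ε : ℝ} (hε : 0 < ε) :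
    ∃ χ ∈ maxAffine D, ∀ x, |ψ x - χ x| ≤ ε * (1 + ‖x‖) := by
  refine supClosure_min (t := {ψ | ∃ χ ∈ maxAffine D, ∀ x, |ψ x - χ x| ≤ ε * (1 + ‖x‖)})
    ?_ ?_ hψ
  · rintro _ ⟨p, hp, rfl⟩
    obtain ⟨q, hq, hpq⟩ := Metric.mem_closure_iff.1 (h hp) ε hε
    refine ⟨affineFun q, subset_supClosure (Set.mem_image_of_mem _ hq), fun x => ?_⟩
    exact (abs_affineFun_sub_affineFun_le p q x).trans (by gcongr)
  · rintro f ⟨χ, hχ, hfχ⟩ g ⟨η, hη, hgη⟩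
    exact ⟨χ ⊔ η, supClosed_supClosure hχ hη, fun x =>
      (abs_max_sub_max_le_max _ _ _ _).trans (max_le (hfχ x) (hgη x))⟩

theorem exists_monotone_seq_maxAffine_tendsto [HereditarilyLindelofSpace E] {φ : E → ℝ}
    (hconv : ConvexOn ℝ Set.univ φ) (hlsc : LowerSemicontinuous φ) :
    ∃ u : ℕ → E → ℝ, Monotone u ∧ (∀ k, u k ∈ maxAffine {p | affineFun p ≤ φ}) ∧
      ∀ x, Tendsto (fun k => u k x) atTop (𝓝 (φ x)) := by
  obtain ⟨l, c, hle, hsup⟩ := hconv.real_univ_sSup_of_nat_affine_eq hlsc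
  let a : ℕ → E → ℝ := fun i => affineFun (l i, c i)
  have ha : BddAbove (Set.range a) := ⟨φ, Set.forall_mem_range.2 hle⟩
  have hlub : IsLUB (Set.range (partialSups a)) φ := by
    have hsup' : ⨆ i, a i = φ := hsup
    rw [← hsup', ← ciSup_partialSups_eq ha]
    exact isLUB_ciSup (bddAbove_range_partialSups.2 ha)
  exact ⟨partialSups a, (partialSups a).monotone,
    partialSups_mem_supClosure fun i => Set.mem_image_of_mem affineFun (hle i),
    tendsto_pi_nhds.1 (tendsto_atTop_isLUB (partialSups a).monotone hlub)⟩

section ConvexOrder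

variable {Ω Ω' : Type*} {mΩ : MeasurableSpace Ω} {mΩ' : MeasurableSpace Ω'}
  {P : Measure Ω} {P' : Measure Ω'} {X : Ω → E} {Y : Ω' → E}

/-- The order generated by the lower semicontinuous convex functions that are monotone along `V`:
the convex order for `V = ∅`, the increasing convex order for `V` the positive orthant.
In finite dimension every convex function is continuous, so the semicontinuity is no restriction. -/
def ConvexOrderAlong (V : Set E) (P : Measure Ω) (P' : Measure Ω') (X : Ω → E) (Y : Ω' → E) :
    Prop :=
  ∀ φ : E → ℝ, ConvexOn ℝ Set.univ φ → LowerSemicontinuous φ → MonotoneAlong V φ →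
    Integrable (fun ω => φ (X ω)) P → Integrable (fun ω => φ (Y ω)) P' →
    ∫ ω, φ (X ω) ∂P ≤ ∫ ω, φ (Y ω) ∂P'

variable [IsFiniteMeasure P] [IsFiniteMeasure P']

theorem integrable_of_mem_maxAffine {D : Set (StrongDual ℝ E × ℝ)} (hX : Integrable X P)
    {ψ : E → ℝ} (hψ : ψ ∈ maxAffine D) : Integrable (fun ω => ψ (X ω)) P :=
  have ⟨_, hK⟩ := exists_lipschitzWith_of_mem_maxAffine hψ
  integrable_comp_of_lipschitzWith hX hK

theorem integral_le_integral_of_maxAffine_dense {D D' : Set (StrongDual ℝ E × ℝ)}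
    (h : D' ⊆ closure D) (hX : Integrable X P) (hY : Integrable Y P')
    (hD : ∀ χ ∈ maxAffine D, ∫ ω, χ (X ω) ∂P ≤ ∫ ω, χ (Y ω) ∂P')
    {ψ : E → ℝ} (hψ : ψ ∈ maxAffine D') : ∫ ω, ψ (X ω) ∂P ≤ ∫ ω, ψ (Y ω) ∂P' := by
  have hX₁ : Integrable (fun ω => 1 + ‖X ω‖) P := (integrable_const 1).add hX.norm
  have hY₁ : Integrable (fun ω => 1 + ‖Y ω‖) P' := (integrable_const 1).add hY.norm
  let M := ∫ ω, 1 + ‖X ω‖ ∂P + ∫ ω, 1 + ‖Y ω‖ ∂P'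
  have hbound : ∀ ε > 0, ∫ ω, ψ (X ω) ∂P ≤ ∫ ω, ψ (Y ω) ∂P' + ε * M := by
    intro ε hε
    obtain ⟨χ, hχ, hψχ⟩ := exists_mem_maxAffine_abs_sub_le h hψ hε
    have hdistX := norm_integral_sub_integral_le (integrable_of_mem_maxAffine hX hψ)
      (integrable_of_mem_maxAffine hX hχ) (hX₁.const_mul ε) (ae_of_all P fun ω => hψχ (X ω))
    have hdistY := norm_integral_sub_integral_le (integrable_of_mem_maxAffine hY hψ)
      (integrable_of_mem_maxAffine hY hχ) (hY₁.const_mul ε) (ae_of_all P' fun ω => hψχ (Y ω))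
    rw [Real.norm_eq_abs, integral_const_mul] at hdistX hdistY
    have hM : ε * M = ε * ∫ ω, 1 + ‖X ω‖ ∂P + ε * ∫ ω, 1 + ‖Y ω‖ ∂P' := mul_add _ _ _
    linarith [(abs_le.1 hdistX).2, (abs_le.1 hdistY).1, hD χ hχ, hM]
  have hlim : Tendsto (fun ε => ∫ ω, ψ (Y ω) ∂P' + ε * M) (𝓝[>] 0)
      (𝓝 (∫ ω, ψ (Y ω) ∂P')) := by
    have hcont : Continuous fun ε => ∫ ω, ψ (Y ω) ∂P' + ε * M := by fun_prop
    exact tendsto_nhdsWithin_of_tendsto_nhds (hcont.tendsto' 0 _ (by simp))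
  exact ge_of_tendsto hlim (eventually_mem_nhdsWithin.mono hbound)

theorem convexOrderAlong_iff_maxAffine [HereditarilyLindelofSpace E] {V : Set E}
    {D : Set (StrongDual ℝ E × ℝ)} (hD : D ⊆ {p | MonotoneAlong V (affineFun p)})
    (hdense : {p | MonotoneAlong V (affineFun p)} ⊆ closure D)
    (hX : Integrable X P) (hY : Integrable Y P') :
    ConvexOrderAlong V P P' X Y ↔
      ∀ ψ ∈ maxAffine D, ∫ ω, ψ (X ω) ∂P ≤ ∫ ω, ψ (Y ω) ∂P' := by
  refine ⟨fun h ψ hψ => ?_, fun h φ hconv hlsc hmono hφX hφY => ?_⟩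
  · obtain ⟨K, hK⟩ := exists_lipschitzWith_of_mem_maxAffine hψ
    exact h ψ (convexOn_of_mem_maxAffine hψ) hK.continuous.lowerSemicontinuous
      (monotoneAlong_of_mem_maxAffine hD hψ) (integrable_of_mem_maxAffine hX hψ)
      (integrable_of_mem_maxAffine hY hψ)
  · obtain ⟨u, hu_mono, hu_mem, hu_lim⟩ := exists_monotone_seq_maxAffine_tendsto hconv hlsc
    have hminorants : {p | affineFun p ≤ φ} ⊆ closure D :=
      fun p hp => hdense (hmono.affineFun_of_le hp)
    have hlimX := integral_tendsto_of_tendsto_of_monotone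
      (fun k => integrable_of_mem_maxAffine hX (hu_mem k)) hφX
      (ae_of_all P fun ω i j hij => hu_mono hij (X ω)) (ae_of_all P fun ω => hu_lim (X ω))
    have hlimY := integral_tendsto_of_tendsto_of_monotone
      (fun k => integrable_of_mem_maxAffine hY (hu_mem k)) hφY
      (ae_of_all P' fun ω i j hij => hu_mono hij (Y ω)) (ae_of_all P' fun ω => hu_lim (Y ω))
    exact le_of_tendsto_of_tendsto' hlimX hlimY fun k =>
      integral_le_integral_of_maxAffine_dense hminorants hX hY h (hu_mem k)

end ConvexOrder

theorem countable_char_convex_orders_general.{u, v} [SecondCountableTopology E]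
    [SecondCountableTopology (StrongDual ℝ E)] (V : Set E) :
    ∃ C : Set (E → ℝ), C.Countable ∧
      (∀ φ ∈ C, ConvexOn ℝ Set.univ φ ∧ MonotoneAlong V φ ∧ ∃ K : NNReal, LipschitzWith K φ) ∧
      ∀ (Ω : Type u) (Ω' : Type v) (mΩ : MeasurableSpace Ω) (mΩ' : MeasurableSpace Ω')
          (P : Measure Ω) (P' : Measure Ω'),
        IsFiniteMeasure P → IsFiniteMeasure P' →
        ∀ (X : Ω → E) (Y : Ω' → E), Integrable X P → Integrable Y P' →
          (ConvexOrderAlong V P P' X Y ↔ ∀ φ ∈ C, ∫ ω, φ (X ω) ∂P ≤ ∫ ω, φ (Y ω) ∂P') := by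
  obtain ⟨D, hD, hD_countable, hD_dense⟩ := (TopologicalSpace.IsSeparable.of_separableSpace
    {p : StrongDual ℝ E × ℝ | MonotoneAlong V (affineFun p)}).exists_countable_dense_subset
  exact ⟨maxAffine D, countable_maxAffine hD_countable,
    fun φ hφ => ⟨convexOn_of_mem_maxAffine hφ, monotoneAlong_of_mem_maxAffine hD hφ,
      exists_lipschitzWith_of_mem_maxAffine hφ⟩,
    fun _ _ _ _ _ _ _ _ _ _ hX hY => convexOrderAlong_iff_maxAffine hD hD_dense hX hY⟩

theorem lowerSemicontinuous_of_convexOn_univ [FiniteDimensional ℝ E] {φ : E → ℝ}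
    (hφ : ConvexOn ℝ Set.univ φ) : LowerSemicontinuous φ :=
  (continuousOn_univ.1 (hφ.continuousOn isOpen_univ)).lowerSemicontinuous

end NormedSpace

section Euclidean

variable {d : ℕ} {Ω Ω' : Type} {mΩ : MeasurableSpace Ω} {mΩ' : MeasurableSpace Ω'}
  {P : Measure Ω} {P' : Measure Ω'} {X : Ω → Euc d} {Y : Ω' → Euc d}

theorem coordMono_iff_monotoneAlong {φ : Euc d → ℝ} :
    CoordMono φ ↔ MonotoneAlong {v | ∀ i, 0 ≤ v i} φ := by
  refine ⟨fun h x v hv => h x (x + v) fun i => ?_, fun h x y hxy => ?_⟩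
  · simpa using hv i
  · simpa using h x (y - x) fun i => by simpa using hxy i

theorem cxLe2_iff_convexOrderAlong : CXLe2 P P' X Y ↔ ConvexOrderAlong ∅ P P' X Y :=
  ⟨fun h φ hconv _ _ => h φ hconv, fun h φ hconv =>
    h φ hconv (lowerSemicontinuous_of_convexOn_univ hconv) fun _ _ hv => hv.elim⟩

theorem icxLe2_iff_convexOrderAlong :
    ICXLe2 P P' X Y ↔ ConvexOrderAlong {v | ∀ i, 0 ≤ v i} P P' X Y :=
  ⟨fun h φ hconv _ hmono => h φ hconv (coordMono_iff_monotoneAlong.2 hmono), fun h φ hconv hmono =>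
    h φ hconv (lowerSemicontinuous_of_convexOn_univ hconv) (coordMono_iff_monotoneAlong.1 hmono)⟩

end Euclidean

/-- There are countable families of Lipschitz (increasing) convex functions which
characterise the (increasing) convex order of integrable random vectors. -/
theorem countable_char_convex_orders (d : ℕ) (hd : 1 ≤ d) :
    ∃ C Cplus : Set (Euc d → ℝ),
      C.Countable ∧ Cplus.Countable ∧
      (∀ φ ∈ C, ConvexOn ℝ Set.univ φ ∧ ∃ K : NNReal, LipschitzWith K φ) ∧
      (∀ φ ∈ Cplus, ConvexOn ℝ Set.univ φ ∧ CoordMono φ ∧ ∃ K : NNReal, LipschitzWith K φ) ∧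
      (∀ (Ω Ω' : Type) (mΩ : MeasurableSpace Ω) (mΩ' : MeasurableSpace Ω')
          (P : Measure Ω) (P' : Measure Ω'),
        IsProbabilityMeasure P → IsProbabilityMeasure P' →
        ∀ (X : Ω → Euc d) (Y : Ω' → Euc d),
          Measurable X → Measurable Y → Integrable X P → Integrable Y P' →
          (CXLe2 P P' X Y ↔ ∀ φ ∈ C, ∫ ω, φ (X ω) ∂P ≤ ∫ ω, φ (Y ω) ∂P') ∧
          (ICXLe2 P P' X Y ↔ ∀ φ ∈ Cplus, ∫ ω, φ (X ω) ∂P ≤ ∫ ω, φ (Y ω) ∂P')) := by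
  obtain ⟨C, hC, hC_mem, hC_iff⟩ := countable_char_convex_orders_general (∅ : Set (Euc d))
  obtain ⟨C', hC', hC'_mem, hC'_iff⟩ :=
    countable_char_convex_orders_general {v : Euc d | ∀ i, 0 ≤ v i}
  simp only [← coordMono_iff_monotoneAlong] at hC'_mem
  refine ⟨C, C', hC, hC', fun φ hφ => ⟨(hC_mem φ hφ).1, (hC_mem φ hφ).2.2⟩, hC'_mem, ?_⟩
  intro Ω Ω' _ _ P P' _ _ X Y _ _ hX hY
  exact ⟨cxLe2_iff_convexOrderAlong.trans
      (hC_iff _ _ _ _ P P' inferInstance inferInstance X Y hX hY),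
    icxLe2_iff_convexOrderAlong.trans
      (hC'_iff _ _ _ _ P P' inferInstance inferInstance X Y hX hY)⟩
end
end
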